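/- arXiv:1810.00655 — 7 statements merged into one kernel-verified Lean document; each statement's English description precedes it below -/
import Mathlib

section
/- With the notation below, let a ∈ {1,2,3} and let {e_α} be any orthonormal basis of p_a with respect to the inner product ⟨·,·⟩. Then Σ_{α,β,γ} ⟨[e_α, e_β], e_γ⟩² = k_a(k_a+1)(2k_a+1)/(n+1), where the sum is over all triples of basis elements of p_a. -/
open Matrix

/-- Total size `n = k₁ + k₂ + k₃`. -/
abbrev blockTotal (k : Fin 3 → ℕ) : ℕ := k 0 + k 1 + k 2

/-- The block to which the index `i ∈ Fin n` belongs, for row/column blocks of sizes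
`k 0, k 1, k 2`. -/
def blockOf (k : Fin 3 → ℕ) (i : Fin (blockTotal k)) : Fin 3 :=
  if (i : ℕ) < k 0 then 0 else if (i : ℕ) < k 0 + k 1 then 1 else 2

/-- The subspace of the compact symplectic Lie algebra `sp(n)` (realized as `2n × 2n` complex
matrices `Z = [[X, −conj Y], [Y, conj X]]` with `X` skew-Hermitian and `Y` complex symmetric)
consisting of those `Z` for which the only possibly nonzero `n × n`-blocks of `X` and of `Y`
are the blocks `(a, b)` with `(a, b) ∈ S`. -/
def spBlockSet (k : Fin 3 → ℕ) (S : Set (Fin 3 × Fin 3)) :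
    Set (Matrix (Fin (blockTotal k) ⊕ Fin (blockTotal k))
      (Fin (blockTotal k) ⊕ Fin (blockTotal k)) ℂ) :=
  { Z | ∃ X Y : Matrix (Fin (blockTotal k)) (Fin (blockTotal k)) ℂ,
      Xᴴ = -X ∧ Yᵀ = Y ∧
      (∀ i j, X i j ≠ 0 → (blockOf k i, blockOf k j) ∈ S) ∧
      (∀ i j, Y i j ≠ 0 → (blockOf k i, blockOf k j) ∈ S) ∧
      Z = Matrix.fromBlocks X (-(Y.map (starRingEnd ℂ))) Y (X.map (starRingEnd ℂ)) }

/-- The subspace `p_a ⊆ sp(n)`: the only possibly nonzero blocks of `X` and `Y` are their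
`(a, a)` blocks. -/
def pDiag (k : Fin 3 → ℕ) (a : Fin 3) := spBlockSet k {(a, a)}

/-- The subspace `p_{ab} ⊆ sp(n)` (for `a ≠ b`): the only possibly nonzero blocks of `X` and
`Y` are their `(a, b)` and `(b, a)` blocks. -/
def pOff (k : Fin 3 → ℕ) (a b : Fin 3) := spBlockSet k {(a, b), (b, a)}

/-- The inner product `⟨Z, W⟩ = −2(n+1)·tr(Z W)` (the negative of the Killing form of
`sp(n)`), with values in `ℂ`; it is real and positive definite on `sp(n)`. -/
noncomputable def spInner (k : Fin 3 → ℕ)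
    (Z W : Matrix (Fin (blockTotal k) ⊕ Fin (blockTotal k))
      (Fin (blockTotal k) ⊕ Fin (blockTotal k)) ℂ) : ℂ :=
  -(2 * ((blockTotal k : ℂ) + 1)) * Matrix.trace (Z * W)

section CasimirAux

variable {m : Type} [Fintype m] [DecidableEq m] {ι : Type} [Fintype ι]

lemma aux_entry (Q J : Matrix m m ℂ) (c : ℂ) (e : ι → Matrix m m ℂ)
    (hrep : ∀ M : Matrix m m ℂ, ∑ g, trace (e g * M) • e g
      = (-(1 / (2 * c))) • (Q * M * Q + J * Mᵀ * J)) (i j l r : m) :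
    ∑ g, e g i j * e g l r = -(1 / (2 * c)) * (Q i r * Q l j + J i l * J r j) := by
  have h := congrFun (congrFun (hrep (Matrix.single r l 1)) i) j
  rw [Matrix.sum_apply] at h
  simp only [Matrix.smul_apply, Matrix.add_apply, smul_eq_mul, Matrix.trace_mul_single,
    Matrix.transpose_single] at h
  rw [Matrix.mul_apply, Matrix.mul_apply] at h
  have h1 : ∀ x, (Q * Matrix.single r l (1:ℂ)) i x = if x = l then Q i r else 0 := by
    intro x
    by_cases hx : x = l
    · subst hx; simp
    · simp [hx]
  have h2 : ∀ x, (J * Matrix.single l r (1:ℂ)) i x = if x = r then J i l else 0 := by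
    intro x
    by_cases hx : x = r
    · subst hx; simp
    · simp [hx]
  simp only [h1, h2, ite_mul, zero_mul, Finset.sum_ite_eq', Finset.mem_univ, if_true] at h
  rw [← h]
  refine Finset.sum_congr rfl fun g _ => ?_
  simp [mul_comm]

lemma aux_sandwich (Q J : Matrix m m ℂ) (c : ℂ) (e : ι → Matrix m m ℂ)
    (hJT : Jᵀ = -J)
    (hrep : ∀ M : Matrix m m ℂ, ∑ g, trace (e g * M) • e g
      = (-(1 / (2 * c))) • (Q * M * Q + J * Mᵀ * J)) (M : Matrix m m ℂ) :
    ∑ g, e g * M * e g = (-(1 / (2 * c))) • (trace (Q * M) • Q - J * Mᵀ * J) := by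
  ext i r
  rw [Matrix.sum_apply]
  have hJ : ∀ x y, J x y = - J y x := fun x y => by
    have := congrFun (congrFun hJT y) x
    simpa using this
  simp only [Matrix.mul_apply, Matrix.smul_apply, Matrix.sub_apply, smul_eq_mul,
    Finset.sum_mul, Matrix.trace, Matrix.diag_apply, Matrix.transpose_apply]
  rw [Finset.sum_comm]
  have : ∀ l, ∑ g, ∑ j, e g i j * M j l * e g l r
      = ∑ j, M j l * (-(1 / (2 * c)) * (Q i r * Q l j + J i l * J r j)) := by
    intro l
    rw [Finset.sum_comm]
    refine Finset.sum_congr rfl fun j _ => ?_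
    rw [← aux_entry Q J c e hrep, Finset.mul_sum]
    refine Finset.sum_congr rfl fun g _ => ?_
    ring
  simp only [this]
  rw [mul_sub, Finset.mul_sum, Finset.mul_sum]
  have h3 : ∑ x, -(1 / (2 * c)) * ∑ i_1, J i i_1 * M x i_1 * J x r
     = ∑ l, ∑ j, -(1 / (2 * c)) * (J i l * M j l * J j r) := by
    simp only [Finset.mul_sum]
    exact Finset.sum_comm
  rw [h3, ← Finset.sum_sub_distrib]
  refine Finset.sum_congr rfl fun l _ => ?_
  rw [Finset.mul_sum, ← Finset.sum_sub_distrib]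
  refine Finset.sum_congr rfl fun j _ => ?_
  rw [hJ r j]
  ring

lemma aux_casimir (Q J : Matrix m m ℂ) (c κ : ℂ) (hc : c ≠ 0) (e : ι → Matrix m m ℂ)
    (hJT : Jᵀ = -J) (hJJ : J * J = -Q) (hQJ : Q * J = J) (hJQ : J * Q = J)
    (hQ : trace Q = 2 * κ)
    (hrep : ∀ M : Matrix m m ℂ, ∑ g, trace (e g * M) • e g
      = (-(1 / (2 * c))) • (Q * M * Q + J * Mᵀ * J))
    (he : ∀ g, e g = J * (e g)ᵀ * J) :
    ∑ α, ∑ β, ∑ γ, (-c * trace ((e α * e β - e β * e α) * e γ)) ^ 2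
      = 2 * κ * (κ + 1) * (2 * κ + 1) / c := by
  have hQe : ∀ g, Q * e g = e g := fun g => by
    rw [he g, ← Matrix.mul_assoc, ← Matrix.mul_assoc, hQJ]
  have heQ : ∀ g, e g * Q = e g := fun g => by
    rw [he g, Matrix.mul_assoc, hJQ]
  have hT : ∀ g, J * e g * J = (e g)ᵀ := fun g => by
    have h1 : (e g)ᵀ = (J * (e g)ᵀ * J)ᵀ := by rw [← he g]
    rw [h1]
    simp [Matrix.transpose_mul, hJT, Matrix.mul_assoc]
  have hbr : ∀ a b, J * (e a * e b - e b * e a)ᵀ * J = e a * e b - e b * e a := by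
    intro a b
    have key : ∀ a b, J * (e a * e b)ᵀ * J = - (e b * e a) := by
      intro a b
      calc J * (e a * e b)ᵀ * J = J * ((J * e b * J) * (J * e a * J)) * J := by
            rw [Matrix.transpose_mul, hT, hT]
        _ = (J * J) * e b * (J * J) * e a * (J * J) := by simp only [Matrix.mul_assoc]
        _ = - (e b * e a) := by
            rw [hJJ]
            simp [hQe, heQ, Matrix.mul_assoc]
    rw [Matrix.transpose_sub, Matrix.mul_sub, Matrix.sub_mul, key, key]
    abel
  have hsq : ∀ A : Matrix m m ℂ, Q * A * Q = A → J * Aᵀ * J = A →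
      ∑ γ, (-c * trace (A * e γ)) ^ 2 = -c * trace (A * A) := by
    intro A h1 h2
    have h := congrArg (fun Z => trace (A * Z)) (hrep A)
    simp only [h1, h2, Matrix.mul_sum, Matrix.trace_sum, Matrix.mul_smul, Matrix.trace_smul,
      smul_eq_mul, Matrix.mul_add, Matrix.trace_add] at h
    have h' : ∑ γ, (-c * trace (A * e γ)) ^ 2
        = c ^ 2 * ∑ x, trace (e x * A) * trace (A * e x) := by
      rw [Finset.mul_sum]
      refine Finset.sum_congr rfl fun g _ => ?_
      rw [Matrix.trace_mul_comm (e g) A]; ring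
    rw [h', h]
    field_simp
    ring
  have hQbr : ∀ a b, Q * (e a * e b - e b * e a) * Q = e a * e b - e b * e a := by
    intro a b
    rw [Matrix.mul_sub, Matrix.sub_mul]
    simp only [Matrix.mul_assoc, heQ]
    simp only [← Matrix.mul_assoc, hQe]
  simp only [hsq _ (hQbr _ _) (hbr _ _)]
  have htr0 : ∀ g, trace (e g) = 0 := by
    intro g
    have h1 : trace (e g) = trace (J * (J * (e g)ᵀ)) := by
      conv_lhs => rw [he g]
      rw [Matrix.trace_mul_comm]
    have h2 : (e g)ᵀ * Q = (e g)ᵀ := by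
      rw [← hT g, Matrix.mul_assoc, hJQ]
    rw [← Matrix.mul_assoc, hJJ, Matrix.neg_mul, Matrix.trace_neg, Matrix.trace_mul_comm, h2,
      Matrix.trace_transpose] at h1
    linear_combination h1 / 2
  have hs1 : ∑ b, e b * e b = (-(1 / (2 * c)) * (2 * κ + 1)) • Q := by
    have h := aux_sandwich Q J c e hJT hrep 1
    simp only [Matrix.mul_one, Matrix.transpose_one, hJJ, hQ] at h
    rw [h, mul_smul (-(1 / (2 * c))), add_smul, one_smul, sub_neg_eq_add]
  have hs2 : ∀ a, ∑ b, e b * e a * e b = (1 / (2 * c)) • e a := by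
    intro a
    have h := aux_sandwich Q J c e hJT hrep (e a)
    rw [hQe, htr0, ← he a, zero_smul, zero_sub, smul_neg, neg_smul, neg_neg] at h
    exact h
  have hin : ∀ a, ∑ b, -c * trace ((e a * e b - e b * e a) * (e a * e b - e b * e a))
      = -(2 * κ + 2) * trace (e a * e a) := by
    intro a
    have h1 : ∀ b, trace ((e a * e b - e b * e a) * (e a * e b - e b * e a))
        = 2 * trace (e a * (e b * e a * e b)) - 2 * trace (e a * e a * (e b * e b)) := by
      intro b
      simp only [Matrix.mul_sub, Matrix.sub_mul, Matrix.trace_sub]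
      have t1 : trace (e b * e a * (e b * e a)) = trace (e a * (e b * e a * e b)) := by
        rw [Matrix.mul_assoc, Matrix.trace_mul_comm]; simp only [Matrix.mul_assoc]
      have t2 : trace (e a * e b * (e a * e b)) = trace (e a * (e b * e a * e b)) := by
        simp only [Matrix.mul_assoc]
      have t3 : trace (e a * e b * (e b * e a)) = trace (e a * e a * (e b * e b)) := by
        rw [← Matrix.mul_assoc, Matrix.trace_mul_comm]; simp only [Matrix.mul_assoc]
      have t4 : trace (e b * e a * (e a * e b)) = trace (e a * e a * (e b * e b)) := by
        rw [Matrix.mul_assoc, Matrix.trace_mul_comm]; simp only [Matrix.mul_assoc]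
      rw [t1, t2, t3, t4]; ring
    simp only [h1]
    rw [← Finset.mul_sum, Finset.sum_sub_distrib, ← Finset.mul_sum, ← Finset.mul_sum,
      ← Matrix.trace_sum, ← Matrix.trace_sum, ← Matrix.mul_sum, ← Matrix.mul_sum, hs1, hs2]
    simp only [Matrix.mul_smul, Matrix.trace_smul, smul_eq_mul, Matrix.mul_assoc, heQ]
    field_simp
    ring
  simp only [hin]
  rw [← Finset.mul_sum, ← Matrix.trace_sum, hs1, Matrix.trace_smul, hQ, smul_eq_mul]
  field_simp

lemma aux_rep (Q J : Matrix m m ℂ) (c : ℂ) (hc : c ≠ 0) [DecidableEq ι] (e : ι → Matrix m m ℂ)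
    (hJT : Jᵀ = -J) (hJH : Jᴴ = -J) (hJJ : J * J = -Q) (hQJ : Q * J = J) (hJQ : J * Q = J)
    (hQT : Qᵀ = Q)
    (he : ∀ g, e g = J * (e g)ᵀ * J)
    (hspan : ∀ Z : Matrix m m ℂ, Zᴴ = -Z → Z = J * Zᵀ * J → Z ∈ Submodule.span ℝ (Set.range e))
    (honb : ∀ i j, -c * trace (e i * e j) = if i = j then 1 else 0) (M : Matrix m m ℂ) :
    ∑ g, trace (e g * M) • e g = (-(1 / (2 * c))) • (Q * M * Q + J * Mᵀ * J) := by
  have hQe : ∀ g, Q * e g = e g := fun g => by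
    rw [he g, ← Matrix.mul_assoc, ← Matrix.mul_assoc, hQJ]
  have heQ : ∀ g, e g * Q = e g := fun g => by
    rw [he g, Matrix.mul_assoc, hJQ]
  have hT : ∀ g, J * e g * J = (e g)ᵀ := fun g => by
    have h1 : (e g)ᵀ = (J * (e g)ᵀ * J)ᵀ := by rw [← he g]
    rw [h1]
    simp [Matrix.transpose_mul, hJT, Matrix.mul_assoc]
  -- linear operator
  have hT1 : ∀ Z ∈ Submodule.span ℝ (Set.range e), ∑ g, trace (e g * Z) • e g = (-(1 / c)) • Z := by
    intro Z hZ
    induction hZ using Submodule.span_induction with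
    | mem x hx =>
      obtain ⟨i, rfl⟩ := hx
      have : ∀ g, trace (e g * e i) = if g = i then -(1 / c) else 0 := by
        intro g
        have h := honb g i
        by_cases hgi : g = i
        · rw [if_pos hgi] at h ⊢
          field_simp
          linear_combination -h
        · rw [if_neg hgi] at h ⊢
          simpa [hc] using h
      simp [this]
    | zero => simp
    | add x y _ _ hx hy =>
      simp only [Matrix.mul_add, Matrix.trace_add, add_smul, Finset.sum_add_distrib, hx, hy,
        smul_add]
    | smul r x _ hx =>
      simp only [Matrix.mul_smul, Matrix.trace_smul, smul_assoc]
      rw [← Finset.smul_sum, hx, smul_comm]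
  set W := Q * M * Q + J * Mᵀ * J with hW
  have htr : ∀ g, trace (e g * M) = trace (e g * W) / 2 := by
    intro g
    have a1 : trace (e g * (Q * M * Q)) = trace (e g * M) := by
      rw [Matrix.mul_assoc Q, ← Matrix.mul_assoc, heQ, ← Matrix.mul_assoc, Matrix.trace_mul_comm,
        ← Matrix.mul_assoc, hQe]
    have a2 : trace (e g * (J * Mᵀ * J)) = trace (e g * M) := by
      rw [← Matrix.mul_assoc, Matrix.trace_mul_comm, ← Matrix.mul_assoc, ← Matrix.mul_assoc, hT,
        ← Matrix.transpose_mul, Matrix.trace_transpose, Matrix.trace_mul_comm]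
    rw [hW, Matrix.mul_add, Matrix.trace_add, a1, a2]; ring
  have hWJ : J * Wᵀ * J = W := by
    rw [hW]
    simp only [Matrix.transpose_add, Matrix.transpose_mul, Matrix.transpose_transpose, hQT, hJT]
    have b1 : J * (Q * (Mᵀ * Q)) * J = J * Mᵀ * J := by
      rw [← Matrix.mul_assoc J Q, hJQ, Matrix.mul_assoc, Matrix.mul_assoc Mᵀ, hQJ,
        Matrix.mul_assoc]
    have b2 : J * (-J * (M * -J)) * J = Q * M * Q := by
      have : J * (-J * (M * -J)) * J = (J * J) * M * (J * J) := by
        simp [Matrix.mul_assoc]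
      rw [this, hJJ]; simp
    rw [Matrix.mul_add, Matrix.add_mul, b1, b2, add_comm]
  have hWH : J * (Wᴴ)ᵀ * J = Wᴴ := by
    conv_rhs => rw [← hWJ]
    simp only [Matrix.conjTranspose_mul, hJH, Matrix.neg_mul, Matrix.mul_neg, neg_neg]
    rw [Matrix.mul_assoc]
    rfl
  have hU := hT1 (W - Wᴴ) (hspan _ (by simp) (by
    rw [Matrix.transpose_sub, Matrix.mul_sub, Matrix.sub_mul, hWJ, hWH]))
  have hV := hT1 (Complex.I • (W + Wᴴ)) (hspan _ (by
      rw [Matrix.conjTranspose_smul]; simp [add_comm]) (by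
    rw [Matrix.transpose_smul, Matrix.mul_smul, Matrix.smul_mul, Matrix.transpose_add,
      Matrix.mul_add, Matrix.add_mul, hWJ, hWH]))
  have hdec : W = (1 / 2 : ℂ) • (W - Wᴴ) + (-Complex.I / 2) • (Complex.I • (W + Wᴴ)) := by
    rw [smul_smul]
    have : -Complex.I / 2 * Complex.I = 1 / 2 := by
      linear_combination (-1 / 2) * Complex.I_mul_I
    rw [this, ← smul_add]
    ext i j
    simp
    ring
  have hTW : ∑ g, trace (e g * W) • e g = (-(1 / c)) • W := by
    have hg : ∀ g, trace (e g * W) = (1 / 2 : ℂ) * trace (e g * (W - Wᴴ))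
        + (-Complex.I / 2) * trace (e g * (Complex.I • (W + Wᴴ))) := by
      intro g
      conv_lhs => rw [hdec]
      rw [Matrix.mul_add, Matrix.trace_add, Matrix.mul_smul, Matrix.mul_smul _ (-Complex.I / 2),
        Matrix.trace_smul, Matrix.trace_smul, smul_eq_mul, smul_eq_mul]
    simp only [hg, add_smul, Finset.sum_add_distrib, mul_smul]
    rw [← Finset.smul_sum, ← Finset.smul_sum, hU, hV]
    conv_rhs => rw [hdec]
    ext i j
    simp only [Matrix.smul_apply, Matrix.add_apply, Matrix.sub_apply, smul_eq_mul]
    ring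
  have : ∑ g, trace (e g * M) • e g = (1 / 2 : ℂ) • ∑ g, trace (e g * W) • e g := by
    rw [Finset.smul_sum]
    refine Finset.sum_congr rfl fun g _ => ?_
    rw [htr g, smul_smul]; congr 1; ring
  rw [this, hTW, smul_smul]
  congr 1
  field_simp

end CasimirAux

lemma aux_count (k : Fin 3 → ℕ) (a : Fin 3) :
    ∑ i : Fin (blockTotal k), (if blockOf k i = a then (1:ℂ) else 0) = k a := by
  unfold blockTotal
  rw [Fin.sum_univ_add, Fin.sum_univ_add]
  have h0 : ∀ i : Fin (k 0), blockOf k (Fin.castAdd (k 2) (Fin.castAdd (k 1) i)) = 0 := by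
    intro i; simp [blockOf]
  have h1 : ∀ i : Fin (k 1), blockOf k (Fin.castAdd (k 2) (Fin.natAdd (k 0) i)) = 1 := by
    intro i; simp [blockOf]
  have h2 : ∀ i : Fin (k 2), blockOf k (Fin.natAdd (k 0 + k 1) i) = 2 := by
    intro i
    have : ¬ (k 0 + k 1 + (i : ℕ) < k 0) := by omega
    simp [blockOf, this]
  simp only [h0, h1, h2]
  fin_cases a <;> simp

/-- indicator of block `a`. -/
noncomputable def auxd (k : Fin 3 → ℕ) (a : Fin 3) (i : Fin (blockTotal k)) : ℂ :=
  if blockOf k i = a then 1 else 0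

noncomputable def auxD (k : Fin 3 → ℕ) (a : Fin 3) :
    Matrix (Fin (blockTotal k)) (Fin (blockTotal k)) ℂ := Matrix.diagonal (auxd k a)

noncomputable def auxJ (k : Fin 3 → ℕ) (a : Fin 3) :
    Matrix (Fin (blockTotal k) ⊕ Fin (blockTotal k)) (Fin (blockTotal k) ⊕ Fin (blockTotal k)) ℂ :=
  Matrix.fromBlocks 0 (-auxD k a) (auxD k a) 0

noncomputable def auxQ (k : Fin 3 → ℕ) (a : Fin 3) :
    Matrix (Fin (blockTotal k) ⊕ Fin (blockTotal k)) (Fin (blockTotal k) ⊕ Fin (blockTotal k)) ℂ :=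
  Matrix.fromBlocks (auxD k a) 0 0 (auxD k a)

lemma auxd_sq (k : Fin 3 → ℕ) (a : Fin 3) (i) : auxd k a i * auxd k a i = auxd k a i := by
  unfold auxd; split_ifs <;> simp

lemma auxd_star (k : Fin 3 → ℕ) (a : Fin 3) : star (auxd k a) = auxd k a := by
  ext i; simp only [Pi.star_apply, auxd]; split_ifs <;> simp

lemma auxD_sq (k : Fin 3 → ℕ) (a : Fin 3) : auxD k a * auxD k a = auxD k a := by
  simp only [auxD, Matrix.diagonal_mul_diagonal, auxd_sq]

lemma auxD_sandwich (k : Fin 3 → ℕ) (a : Fin 3)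
    (A : Matrix (Fin (blockTotal k)) (Fin (blockTotal k)) ℂ) (i j) :
    (auxD k a * A * auxD k a) i j = auxd k a i * A i j * auxd k a j := by
  simp [auxD, Matrix.mul_diagonal, Matrix.diagonal_mul]

lemma auxJ_sandwich (k : Fin 3 → ℕ) (a : Fin 3) (A B C E) :
    auxJ k a * (Matrix.fromBlocks A B C E)ᵀ * auxJ k a =
      Matrix.fromBlocks (-(auxD k a * Eᵀ * auxD k a)) (auxD k a * Bᵀ * auxD k a)
        (auxD k a * Cᵀ * auxD k a) (-(auxD k a * Aᵀ * auxD k a)) := by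
  simp [auxJ, Matrix.fromBlocks_transpose, Matrix.fromBlocks_multiply]

lemma auxD_supp (k : Fin 3 → ℕ) (a : Fin 3) (A : Matrix (Fin (blockTotal k)) (Fin (blockTotal k)) ℂ)
    (h : ∀ i j, A i j ≠ 0 → (blockOf k i, blockOf k j) ∈ ({(a, a)} : Set (Fin 3 × Fin 3))) :
    auxD k a * A * auxD k a = A := by
  ext i j
  rw [auxD_sandwich]
  by_cases hA : A i j = 0
  · simp [hA]
  · have := h i j hA
    simp only [Set.mem_singleton_iff, Prod.mk.injEq] at this
    simp [auxd, this.1, this.2]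

lemma auxD_supp_conv (k : Fin 3 → ℕ) (a : Fin 3)
    (A B : Matrix (Fin (blockTotal k)) (Fin (blockTotal k)) ℂ)
    (h : A = auxD k a * B * auxD k a) (i j) (hA : A i j ≠ 0) :
    (blockOf k i, blockOf k j) ∈ ({(a, a)} : Set (Fin 3 × Fin 3)) := by
  rw [h, auxD_sandwich] at hA
  simp only [Set.mem_singleton_iff, Prod.mk.injEq]
  constructor
  · by_contra hh; simp [auxd, hh] at hA
  · by_contra hh; simp [auxd, hh] at hA

lemma auxD_idem (k : Fin 3 → ℕ) (a : Fin 3)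
    (A B : Matrix (Fin (blockTotal k)) (Fin (blockTotal k)) ℂ)
    (h : A = auxD k a * B * auxD k a) : auxD k a * A * auxD k a = A :=
  auxD_supp k a A (auxD_supp_conv k a A B h)

lemma auxD_T (k : Fin 3 → ℕ) (a : Fin 3) : (auxD k a)ᵀ = auxD k a := by
  simp [auxD]

lemma auxD_supp_T (k : Fin 3 → ℕ) (a : Fin 3) (A : Matrix (Fin (blockTotal k)) (Fin (blockTotal k)) ℂ)
    (h : auxD k a * A * auxD k a = A) : auxD k a * Aᵀ * auxD k a = Aᵀ := by
  conv_rhs => rw [← h]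
  simp [Matrix.transpose_mul, auxD_T, Matrix.mul_assoc]

lemma aux_mem (k : Fin 3 → ℕ) (a : Fin 3) {Z} (hZ : Z ∈ pDiag k a) :
    Z = auxJ k a * Zᵀ * auxJ k a := by
  obtain ⟨X, Y, hX, hY, hXs, hYs, rfl⟩ := hZ
  rw [auxJ_sandwich]
  have h1 := auxD_supp k a X hXs
  have h2 := auxD_supp k a Y hYs
  have hXc : (X.map (starRingEnd ℂ))ᵀ = -X := hX
  have hXT : Xᵀ = -(X.map (starRingEnd ℂ)) := by
    have := congrArg (fun A => Aᵀ) hXc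
    simp only [Matrix.transpose_transpose, Matrix.transpose_neg] at this
    rw [this, neg_neg]
  have hYcT : (Y.map (starRingEnd ℂ))ᵀ = Y.map (starRingEnd ℂ) := by
    rw [← Matrix.transpose_map, hY]
  have h3 : auxD k a * (Y.map (starRingEnd ℂ)) * auxD k a = Y.map (starRingEnd ℂ) :=
    auxD_supp k a _ fun i j h => hYs i j (by simpa using h)
  have h4 : auxD k a * (X.map (starRingEnd ℂ)) * auxD k a = X.map (starRingEnd ℂ) :=
    auxD_supp k a _ fun i j h => hXs i j (by simpa using h)
  rw [hXc, hXT, Matrix.transpose_neg, hYcT, hY]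
  simp [h1, h2, h3, h4]

lemma aux_mem_conv (k : Fin 3 → ℕ) (a : Fin 3)
    (Z : Matrix (Fin (blockTotal k) ⊕ Fin (blockTotal k)) (Fin (blockTotal k) ⊕ Fin (blockTotal k)) ℂ)
    (hH : Zᴴ = -Z) (hJ : Z = auxJ k a * Zᵀ * auxJ k a) : Z ∈ pDiag k a := by
  obtain ⟨A, B, C, E, rfl⟩ : ∃ A B C E, Z = Matrix.fromBlocks A B C E :=
    ⟨_, _, _, _, (Matrix.fromBlocks_toBlocks Z).symm⟩
  rw [auxJ_sandwich, Matrix.fromBlocks_inj] at hJ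
  rw [Matrix.fromBlocks_conjTranspose, Matrix.fromBlocks_neg, Matrix.fromBlocks_inj] at hH
  obtain ⟨j1, j2, j3, j4⟩ := hJ
  obtain ⟨h1, h2, h3, h4⟩ := hH
  have j1' : A = auxD k a * (-Eᵀ) * auxD k a := by rw [j1]; simp
  have sA := auxD_idem k a A _ j1'
  have sC := auxD_idem k a C _ j3
  have hCT : Cᵀ = C := by rw [← auxD_supp_T k a C sC]; exact j3.symm
  refine ⟨A, C, h1, hCT, auxD_supp_conv k a A _ j1', auxD_supp_conv k a C _ j3, ?_⟩
  rw [Matrix.fromBlocks_inj]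
  refine ⟨rfl, ?_, rfl, ?_⟩
  · have : Cᴴ = C.map (starRingEnd ℂ) := by
      conv_rhs => rw [← hCT]
      rfl
    rw [← this, h2, neg_neg]
  · rw [j4, auxD_supp_T k a A sA]
    have : A.map (starRingEnd ℂ) = (Aᴴ)ᵀ := rfl
    rw [this, h1, Matrix.transpose_neg]

/-- **Lemma 3.2 (the structure constant `A_{aaa}`).**  Let `{e_α}` be any orthonormal basis
of the real subspace `p_a` with respect to `⟨·,·⟩ = −B`.  Then
`Σ_{α,β,γ} ⟨[e_α, e_β], e_γ⟩² = k_a (k_a + 1)(2 k_a + 1)/(n + 1)`. -/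
theorem structure_constant_Aaaa (k : Fin 3 → ℕ) (hk : ∀ a, 1 ≤ k a) (a : Fin 3)
    {ι : Type} [Fintype ι] [DecidableEq ι]
    (e : ι → Matrix (Fin (blockTotal k) ⊕ Fin (blockTotal k))
      (Fin (blockTotal k) ⊕ Fin (blockTotal k)) ℂ)
    (he : ∀ i, e i ∈ pDiag k a)
    (hspan : ∀ Z ∈ pDiag k a, Z ∈ Submodule.span ℝ (Set.range e))
    (honb : ∀ i j, spInner k (e i) (e j) = if i = j then 1 else 0) :
    ∑ α : ι, ∑ β : ι, ∑ γ : ι, (spInner k (e α * e β - e β * e α) (e γ)) ^ 2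
      = (k a : ℂ) * ((k a : ℂ) + 1) * (2 * (k a : ℂ) + 1) / ((blockTotal k : ℂ) + 1) := by
  have hn : ((blockTotal k : ℂ) + 1) ≠ 0 := Nat.cast_add_one_ne_zero _
  have hc : (2 * ((blockTotal k : ℂ) + 1)) ≠ 0 := mul_ne_zero two_ne_zero hn
  have hJT : (auxJ k a)ᵀ = -auxJ k a := by
    simp [auxJ, Matrix.fromBlocks_transpose, Matrix.fromBlocks_neg, auxD_T]
  have hDH : (auxD k a)ᴴ = auxD k a := by
    rw [auxD, Matrix.diagonal_conjTranspose, auxd_star]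
  have hJH : (auxJ k a)ᴴ = -auxJ k a := by
    simp [auxJ, Matrix.fromBlocks_conjTranspose, Matrix.fromBlocks_neg, hDH]
  have hJJ : auxJ k a * auxJ k a = -auxQ k a := by
    simp [auxJ, auxQ, Matrix.fromBlocks_multiply, Matrix.fromBlocks_neg, auxD_sq]
  have hQJ : auxQ k a * auxJ k a = auxJ k a := by
    simp [auxJ, auxQ, Matrix.fromBlocks_multiply, auxD_sq]
  have hJQ : auxJ k a * auxQ k a = auxJ k a := by
    simp [auxJ, auxQ, Matrix.fromBlocks_multiply, auxD_sq]
  have hQT : (auxQ k a)ᵀ = auxQ k a := by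
    simp [auxQ, Matrix.fromBlocks_transpose, auxD_T]
  have hQ : trace (auxQ k a) = 2 * (k a : ℂ) := by
    have : trace (auxD k a) = k a := by
      rw [auxD, Matrix.trace_diagonal]; exact aux_count k a
    rw [auxQ, Matrix.trace, Fintype.sum_sum_type]
    change trace (auxD k a) + trace (auxD k a) = _
    rw [this]; ring
  have heJ := fun g => aux_mem k a (he g)
  have hrep := aux_rep (auxQ k a) (auxJ k a) _ hc e hJT hJH hJJ hQJ hJQ hQT heJ
    (fun Z h1 h2 => hspan Z (aux_mem_conv k a Z h1 h2)) honb
  have h := aux_casimir (auxQ k a) (auxJ k a) _ (k a : ℂ) hc e hJT hJJ hQJ hJQ hQ hrep heJ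
  refine h.trans ?_
  field_simp
end

section
/- With the notation below, let a, b, c ∈ {1,2,3} be pairwise distinct, and let {f_i}, {g_j}, {h_k} be orthonormal bases of p_{ab}, p_{bc}, p_{ac} respectively, with respect to the inner product ⟨·,·⟩. Then Σ_{i,j,k} ⟨[f_i, g_j], h_k⟩² = 2 k_a k_b k_c/(n+1). -/
open Matrix

/-- block of an index of the doubled index set -/
def bl2 (k : Fin 3 → ℕ) : Fin (blockTotal k) ⊕ Fin (blockTotal k) → Fin 3 :=
  Sum.elim (blockOf k) (blockOf k)

/-- the standard symplectic matrix -/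
abbrev JJ (n : ℕ) : Matrix (Fin n ⊕ Fin n) (Fin n ⊕ Fin n) ℂ := Matrix.J (Fin n) ℂ

lemma JJ_sq (n : ℕ) : JJ n * JJ n = -1 := Matrix.J_squared _ _

lemma JJ_tr (n : ℕ) : (JJ n)ᵀ = - JJ n := Matrix.J_transpose _ _

lemma JJ_star (n : ℕ) : (JJ n)ᴴ = - JJ n := by
  simp [JJ, Matrix.J, Matrix.fromBlocks_conjTranspose, Matrix.fromBlocks_neg]

lemma JJ_block (k : Fin 3 → ℕ) (p q) (hne : JJ (blockTotal k) p q ≠ 0) :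
    bl2 k p = bl2 k q := by
  rcases p with p | p <;> rcases q with q | q <;>
    simp [JJ, Matrix.J, Matrix.one_apply, bl2] at hne ⊢ <;> rw [hne]

lemma mem_props (k : Fin 3 → ℕ) (S : Set (Fin 3 × Fin 3)) (Z) (hZ : Z ∈ spBlockSet k S) :
    Z = JJ _ * Zᵀ * JJ _ ∧ (∀ p q, Z p q ≠ 0 → (bl2 k p, bl2 k q) ∈ S) := by
  obtain ⟨X, Y, hX, hY, hXS, hYS, rfl⟩ := hZ
  have hX' : Xᵀ = - X.map (starRingEnd ℂ) := by
    ext i j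
    have := congrFun (congrFun hX i) j
    simp [Matrix.conjTranspose_apply] at this
    have h2 := congrArg (starRingEnd ℂ) this
    simpa using h2
  constructor
  · rw [Matrix.fromBlocks_transpose, JJ, Matrix.J, Matrix.fromBlocks_multiply,
      Matrix.fromBlocks_multiply]
    have h1 : (X.map (starRingEnd ℂ))ᵀ = - X := by
      rw [← Matrix.transpose_map, hX']
      ext; simp
    have h2 : (Y.map (starRingEnd ℂ))ᵀ = Y.map (starRingEnd ℂ) := by
      rw [← Matrix.transpose_map, hY]
    simp [h1, h2, hX', hY]
  · rintro (p | p) (q | q) hne <;> simp [bl2] at hne ⊢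
    · exact hXS _ _ hne
    · exact hYS _ _ hne
    · exact hYS _ _ hne
    · exact hXS _ _ hne

lemma mem_of_props (k : Fin 3 → ℕ) (S : Set (Fin 3 × Fin 3))
    (Z : Matrix (Fin (blockTotal k) ⊕ Fin (blockTotal k))
      (Fin (blockTotal k) ⊕ Fin (blockTotal k)) ℂ)
    (h1 : Z = JJ _ * Zᵀ * JJ _) (h2 : ∀ p q, Z p q ≠ 0 → (bl2 k p, bl2 k q) ∈ S)
    (h3 : Zᴴ = -Z) : Z ∈ spBlockSet k S := by
  obtain ⟨X, U, Y, V, rfl⟩ : ∃ X U Y V, Z = Matrix.fromBlocks X U Y V :=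
    ⟨_, _, _, _, (Matrix.fromBlocks_toBlocks Z).symm⟩
  rw [Matrix.fromBlocks_transpose, JJ, Matrix.J, Matrix.fromBlocks_multiply,
      Matrix.fromBlocks_multiply, Matrix.fromBlocks_inj] at h1
  rw [Matrix.fromBlocks_conjTranspose, Matrix.fromBlocks_neg, Matrix.fromBlocks_inj] at h3
  obtain ⟨a1, a2, a3, a4⟩ := h1
  obtain ⟨b1, b2, b3, b4⟩ := h3
  simp at a1 a2 a3 a4
  refine ⟨X, Y, b1, a3.symm, fun i j hne => h2 (Sum.inl i) (Sum.inl j) (by simpa using hne),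
    fun i j hne => h2 (Sum.inr i) (Sum.inl j) (by simpa using hne), ?_⟩
  rw [Matrix.fromBlocks_inj]
  refine ⟨rfl, ?_, rfl, ?_⟩
  · rw [← neg_eq_iff_eq_neg, ← b2]
    conv_rhs => rw [a3]
    rfl
  · rw [a4]
    have : X = - Xᴴ := by rw [b1, neg_neg]
    conv_lhs => rw [this]
    ext i j; simp

lemma span_lemma (k : Fin 3 → ℕ) (a b : Fin 3) {ι : Type} [Fintype ι]
    (f : ι → Matrix (Fin (blockTotal k) ⊕ Fin (blockTotal k))
      (Fin (blockTotal k) ⊕ Fin (blockTotal k)) ℂ)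
    (hfspan : ∀ Z ∈ pOff k a b, Z ∈ Submodule.span ℝ (Set.range f))
    (M : Matrix (Fin (blockTotal k) ⊕ Fin (blockTotal k))
      (Fin (blockTotal k) ⊕ Fin (blockTotal k)) ℂ)
    (h1 : M = JJ _ * Mᵀ * JJ _)
    (h2 : ∀ p q, M p q ≠ 0 → (bl2 k p, bl2 k q) ∈ ({(a, b), (b, a)} : Set (Fin 3 × Fin 3))) :
    ∃ c : ι → ℂ, M = ∑ i, c i • f i := by
  have key : ∀ Z ∈ pOff k a b, Z ∈ Submodule.span ℂ (Set.range f) := fun Z hZ =>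
    Submodule.span_le_restrictScalars ℝ ℂ (Set.range f) (hfspan Z hZ)
  have h1' : Mᴴ = JJ _ * Mᴴᵀ * JJ _ := by
    conv_lhs => rw [h1]
    rw [Matrix.conjTranspose_mul, Matrix.conjTranspose_mul, JJ_star]
    simp [Matrix.mul_assoc]
    rfl
  have h2' : ∀ p q, Mᴴ p q ≠ 0 →
      (bl2 k p, bl2 k q) ∈ ({(a, b), (b, a)} : Set (Fin 3 × Fin 3)) := by
    intro p q hne
    have := h2 q p (by simpa [Matrix.conjTranspose_apply] using hne)
    simp at this ⊢
    tauto
  have hA : M - Mᴴ ∈ pOff k a b := by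
    apply mem_of_props
    · rw [Matrix.transpose_sub, Matrix.mul_sub, Matrix.sub_mul, ← h1, ← h1']
    · intro p q hne
      by_cases h : M p q = 0
      · apply h2' p q
        intro h'
        apply hne
        rw [Matrix.sub_apply, h, h', sub_zero]
      · exact h2 p q h
    · simp
  have hB : Complex.I • (M + Mᴴ) ∈ pOff k a b := by
    apply mem_of_props
    · rw [Matrix.transpose_smul, Matrix.mul_smul, Matrix.smul_mul]
      congr 1
      rw [Matrix.transpose_add, Matrix.mul_add, Matrix.add_mul, ← h1, ← h1']
    · intro p q hne
      by_cases h : M p q = 0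
      · apply h2' p q
        intro h'
        apply hne
        rw [Matrix.smul_apply, Matrix.add_apply, h, h', add_zero, smul_zero]
      · exact h2 p q h
    · simp [Matrix.conjTranspose_smul, add_comm]
  have hM : M ∈ Submodule.span ℂ (Set.range f) := by
    have : M = (1/2 : ℂ) • (M - Mᴴ) + (-Complex.I/2) • (Complex.I • (M + Mᴴ)) := by
      rw [smul_smul]
      have : -Complex.I/2 * Complex.I = 1/2 := by
        rw [div_mul_eq_mul_div, neg_mul, Complex.I_mul_I, neg_neg]
      rw [this]
      ext; simp; ring
    rw [this]
    exact Submodule.add_mem _ (Submodule.smul_mem _ _ (key _ hA))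
      (Submodule.smul_mem _ _ (key _ hB))
  obtain ⟨c, hc⟩ := (Submodule.mem_span_range_iff_exists_fun ℂ).1 hM
  exact ⟨c, hc.symm⟩

lemma nz (k : Fin 3 → ℕ) : ((blockTotal k : ℂ) + 1) ≠ 0 := by
  exact_mod_cast Nat.succ_ne_zero (blockTotal k)

lemma JEJ (n : ℕ) (p q p' q' : Fin n ⊕ Fin n) :
    (JJ n * Matrix.single p q (1:ℂ) * JJ n) p' q' = JJ n p' p * JJ n q q' := by
  rw [Matrix.mul_apply, Finset.sum_eq_single q]
  · rw [Matrix.mul_single_apply_same, mul_one]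
  · intro r _ hr
    rw [Matrix.mul_single_apply_of_ne _ _ _ _ _ hr, zero_mul]
  · simp

lemma spInner_single (k : Fin 3 → ℕ) (p q)
    (Z : Matrix (Fin (blockTotal k) ⊕ Fin (blockTotal k))
      (Fin (blockTotal k) ⊕ Fin (blockTotal k)) ℂ) (hZ : Z = JJ _ * Zᵀ * JJ _) :
    spInner k (Matrix.single q p 1 + JJ _ * Matrix.single p q 1 * JJ _) Z
      = -(4 * ((blockTotal k : ℂ) + 1)) * Z p q := by
  have e1 : ∀ (p q) (Z : Matrix (Fin (blockTotal k) ⊕ Fin (blockTotal k))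
      (Fin (blockTotal k) ⊕ Fin (blockTotal k)) ℂ),
      Matrix.trace (Matrix.single q p 1 * Z) = Z p q := by
    intro p q Z
    simp [Matrix.trace_single_mul]
  have hZt : JJ _ * Z * JJ _ = Zᵀ := by
    conv_lhs => rw [hZ]
    have : JJ (blockTotal k) * (JJ _ * Zᵀ * JJ _) * JJ _ = (JJ _ * JJ _) * Zᵀ * (JJ _ * JJ _) := by
      simp only [Matrix.mul_assoc]
    rw [this, JJ_sq]; simp
  have e2 : Matrix.trace (JJ _ * Matrix.single p q 1 * JJ _ * Z) = Z p q := by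
    rw [Matrix.mul_assoc, Matrix.mul_assoc, Matrix.trace_mul_comm, Matrix.mul_assoc,
      hZt, e1, Matrix.transpose_apply]
  rw [spInner, Matrix.add_mul, Matrix.trace_add, e1, e2]
  ring

lemma entry_lemma (k : Fin 3 → ℕ) (a b : Fin 3) (hab : a ≠ b) {ι : Type} [Fintype ι]
    [DecidableEq ι]
    (f : ι → Matrix (Fin (blockTotal k) ⊕ Fin (blockTotal k))
      (Fin (blockTotal k) ⊕ Fin (blockTotal k)) ℂ)
    (hf : ∀ i, f i ∈ pOff k a b)
    (hfspan : ∀ Z ∈ pOff k a b, Z ∈ Submodule.span ℝ (Set.range f))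
    (hfonb : ∀ i j, spInner k (f i) (f j) = if i = j then 1 else 0)
    (p q p' q') (hp : bl2 k p = a) (hq : bl2 k q = b) (hp' : bl2 k p' = a) :
    ∑ i, f i p q * f i p' q' =
      (1 / (4 * ((blockTotal k : ℂ) + 1))) * (JJ _ p p' * JJ _ q q') := by
  set M : Matrix (Fin (blockTotal k) ⊕ Fin (blockTotal k))
      (Fin (blockTotal k) ⊕ Fin (blockTotal k)) ℂ :=
    Matrix.single q p 1 + JJ _ * Matrix.single p q 1 * JJ _ with hM
  obtain ⟨c, hc⟩ := span_lemma k a b f hfspan M (by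
      rw [hM, Matrix.transpose_add, Matrix.transpose_mul, Matrix.transpose_mul, JJ_tr,
        Matrix.transpose_single, Matrix.transpose_single, Matrix.mul_add, Matrix.add_mul]
      have : JJ (blockTotal k) * (-JJ _ * (Matrix.single q p 1 * -JJ _)) * JJ _
        = (JJ _ * JJ _) * Matrix.single q p 1 * (JJ _ * JJ _) := by
        simp only [Matrix.mul_assoc, Matrix.neg_mul, Matrix.mul_neg, neg_neg]
      rw [this, JJ_sq, add_comm]; simp) (by
      intro r s hne
      rw [hM, Matrix.add_apply, JEJ] at hne
      by_cases h : JJ (blockTotal k) r p * JJ _ q s = 0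
      · rw [h, add_zero, Matrix.single_apply] at hne
        have : q = r ∧ p = s := by by_contra h'; simp [h'] at hne
        rw [← this.1, ← this.2, hp, hq]; simp
      · rw [← ne_eq, mul_ne_zero_iff] at h
        rw [JJ_block k r p h.1, ← JJ_block k q s h.2, hp, hq]; simp)
  have hcj : ∀ j, c j = -(4 * ((blockTotal k : ℂ) + 1)) * f j p q := by
    intro j
    rw [← spInner_single k p q (f j) (mem_props k _ _ (hf j)).1, ← hM, hc]
    have : spInner k (∑ i, c i • f i) (f j) = ∑ i, c i * spInner k (f i) (f j) := by
      simp only [spInner, Finset.sum_mul, Matrix.trace_sum, Finset.mul_sum, Matrix.smul_mul,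
        Matrix.trace_smul, smul_eq_mul]
      refine Finset.sum_congr rfl fun i _ => by ring
    rw [this]
    simp [hfonb]
  have e := congrFun (congrFun hc p') q'
  rw [hM, Matrix.add_apply, JEJ, Matrix.single_apply, if_neg, zero_add, Matrix.sum_apply] at e
  · have hJ : JJ (blockTotal k) p' p = - JJ _ p p' := by
      rw [← Matrix.transpose_apply (JJ _) p p', JJ_tr]; rfl
    have e' : ∑ i, (c i • f i) p' q' =
        -(4 * ((blockTotal k : ℂ) + 1)) * ∑ i, f i p q * f i p' q' := by
      rw [Finset.mul_sum]
      refine Finset.sum_congr rfl fun i _ => ?_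
      rw [Matrix.smul_apply, smul_eq_mul, hcj]; ring
    rw [e', hJ] at e
    have := nz k
    field_simp
    linear_combination e
  · rintro ⟨rfl, -⟩
    exact hab (hp'.symm.trans hq)

lemma trace_flip (k : Fin 3 → ℕ)
    (f g h : Matrix (Fin (blockTotal k) ⊕ Fin (blockTotal k))
      (Fin (blockTotal k) ⊕ Fin (blockTotal k)) ℂ)
    (hf : f = JJ _ * fᵀ * JJ _) (hg : g = JJ _ * gᵀ * JJ _) (hh : h = JJ _ * hᵀ * JJ _) :
    Matrix.trace (g * f * h) = - Matrix.trace (f * g * h) := by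
  have e : g * f * h = JJ _ * (gᵀ * fᵀ * hᵀ) * JJ _ := by
    conv_lhs => rw [hf, hg, hh]
    have : JJ (blockTotal k) * gᵀ * JJ _ * (JJ _ * fᵀ * JJ _) * (JJ _ * hᵀ * JJ _)
      = JJ _ * gᵀ * (JJ _ * JJ _) * fᵀ * (JJ _ * JJ _) * hᵀ * JJ _ := by
      simp only [Matrix.mul_assoc]
    rw [this, JJ_sq]
    simp [Matrix.mul_assoc]
  rw [e, Matrix.trace_mul_comm, ← Matrix.mul_assoc, JJ_sq, Matrix.neg_mul, Matrix.one_mul,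
    Matrix.trace_neg, ← Matrix.transpose_mul, ← Matrix.transpose_mul, Matrix.trace_transpose,
    Matrix.trace_mul_comm]

/-- indices of the block `a` -/
def blF (k : Fin 3 → ℕ) (a : Fin 3) : Finset (Fin (blockTotal k) ⊕ Fin (blockTotal k)) :=
  Finset.univ.filter fun p => bl2 k p = a

lemma card_block (k : Fin 3 → ℕ) (a : Fin 3) :
    (Finset.univ.filter fun i => blockOf k i = a).card = k a := by
  have key : ∀ lo hi : ℕ, hi ≤ blockTotal k →
      (Finset.univ.filter fun i : Fin (blockTotal k) => lo ≤ (i:ℕ) ∧ (i:ℕ) < hi).card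
        = hi - lo := by
    intro lo hi hle
    rw [← Nat.card_Ico lo hi]
    refine Finset.card_bij (fun i _ => (i:ℕ)) ?_ ?_ ?_
    · intro i hi; simpa using hi
    · intro i _ j _ h; exact Fin.ext h
    · intro j hj
      rw [Finset.mem_Ico] at hj
      exact ⟨⟨j, by omega⟩, by simpa using hj, rfl⟩
  fin_cases a
  · convert key 0 (k 0) (by simp only [blockTotal]; omega) using 2
    · ext i
      rw [Finset.mem_filter, Finset.mem_filter]
      simp only [blockOf, Finset.mem_univ, true_and, Fin.zero_eta]
      split_ifs <;> simp <;> omega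
    · simp
  · convert key (k 0) (k 0 + k 1) (by simp only [blockTotal]; omega) using 2
    · ext i
      rw [Finset.mem_filter, Finset.mem_filter]
      simp only [blockOf, Finset.mem_univ, true_and, Fin.mk_one]
      split_ifs <;> simp <;> omega
    · simp
  · convert key (k 0 + k 1) (blockTotal k) le_rfl using 2
    · ext i
      rw [Finset.mem_filter, Finset.mem_filter]
      simp only [blockOf, Finset.mem_univ, true_and, Fin.reduceFinMk]
      have := i.2
      split_ifs <;> simp <;> omega
    · simp [blockTotal]

lemma sum_J_sq (k : Fin 3 → ℕ) (a : Fin 3) :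
    ∑ p ∈ blF k a, ∑ p' ∈ blF k a, (JJ (blockTotal k) p p') ^ 2 = 2 * (k a : ℂ) := by
  have h1 : ∀ p ∈ blF k a, ∑ p' ∈ blF k a, (JJ (blockTotal k) p p') ^ 2 = 1 := by
    intro p hp
    have : ∑ p' ∈ blF k a, (JJ (blockTotal k) p p') ^ 2 = ∑ p', (JJ (blockTotal k) p p') ^ 2 := by
      apply Finset.sum_subset (Finset.subset_univ _)
      intro q _ hq
      by_contra hne
      apply hq
      have h0 : JJ (blockTotal k) p q ≠ 0 := fun h0 => hne (by rw [h0]; simp)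
      simp only [blF, Finset.mem_filter, Finset.mem_univ, true_and] at hp ⊢
      rw [← JJ_block k p q h0, hp]
    rw [this, Fintype.sum_sum_type]
    rcases p with p | p <;> simp [JJ, Matrix.J, Matrix.one_apply]
  rw [Finset.sum_congr rfl h1, Finset.sum_const, nsmul_eq_mul, mul_one]
  have : (blF k a).card = 2 * k a := by
    rw [blF, Finset.card_filter, Fintype.sum_sum_type]
    rw [← Finset.card_filter, ← Finset.card_filter]
    have := card_block k a
    have e1 : (Finset.univ.filter fun i => bl2 k (Sum.inl i) = a).card = k a := this
    have e2 : (Finset.univ.filter fun i => bl2 k (Sum.inr i) = a).card = k a := this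
    rw [e1, e2]; ring
  rw [this]; push_cast; ring

lemma trace_blocks (k : Fin 3 → ℕ) (a b c : Fin 3) (hab : a ≠ b) (hbc : b ≠ c) (hac : a ≠ c)
    (f g h : Matrix (Fin (blockTotal k) ⊕ Fin (blockTotal k))
      (Fin (blockTotal k) ⊕ Fin (blockTotal k)) ℂ)
    (hf : f ∈ pOff k a b) (hg : g ∈ pOff k b c) (hh : h ∈ pOff k a c) :
    Matrix.trace (f * g * h) =
      ∑ x ∈ blF k a ×ˢ blF k b ×ˢ blF k c, f x.1 x.2.1 * g x.2.1 x.2.2 * h x.2.2 x.1 := by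
  have : Matrix.trace (f * g * h) = ∑ x : (Fin (blockTotal k) ⊕ Fin (blockTotal k)) ×
      (Fin (blockTotal k) ⊕ Fin (blockTotal k)) × (Fin (blockTotal k) ⊕ Fin (blockTotal k)),
      f x.1 x.2.1 * g x.2.1 x.2.2 * h x.2.2 x.1 := by
    rw [Fintype.sum_prod_type]
    simp only [Matrix.trace, Matrix.diag, Matrix.mul_apply, Finset.sum_mul, Fintype.sum_prod_type]
    refine Finset.sum_congr rfl fun p _ => ?_
    rw [Finset.sum_comm]
  rw [this]
  symm
  apply Finset.sum_subset (Finset.subset_univ _)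
  rintro ⟨p, q, r⟩ _ hx
  by_contra hne
  apply hx
  simp only [mul_ne_zero_iff, ne_eq, mul_eq_zero, not_or] at hne
  have t1 := (mem_props k _ _ hf).2 p q hne.1.1
  have t2 := (mem_props k _ _ hg).2 q r hne.1.2
  have t3 := (mem_props k _ _ hh).2 r p hne.2
  simp only [Set.mem_insert_iff, Set.mem_singleton_iff, Prod.mk.injEq] at t1 t2 t3
  simp only [blF, Finset.mem_product, Finset.mem_filter, Finset.mem_univ, true_and]
  grind

lemma sum_sq_expand {ι κ μ α : Type*} [Fintype ι] [Fintype κ] [Fintype μ] (Ω : Finset α)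
    (F : ι → α → ℂ) (G : κ → α → ℂ) (H : μ → α → ℂ) :
    ∑ i, ∑ j, ∑ l, (∑ x ∈ Ω, F i x * G j x * H l x) ^ 2 =
      ∑ x ∈ Ω, ∑ y ∈ Ω, (∑ i, F i x * F i y) * (∑ j, G j x * G j y) * (∑ l, H l x * H l y) := by
  have e : ∀ x y, (∑ i, F i x * F i y) * (∑ j, G j x * G j y) * (∑ l, H l x * H l y)
      = ∑ i, ∑ j, ∑ l, F i x * G j x * H l x * (F i y * G j y * H l y) := by
    intro x y
    rw [Finset.sum_mul_sum, Finset.sum_mul]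
    refine Finset.sum_congr rfl fun i _ => ?_
    rw [Finset.sum_mul_sum]
    refine Finset.sum_congr rfl fun j _ => ?_
    refine Finset.sum_congr rfl fun l _ => ?_
    ring
  have e2 : ∀ Φ : ι → κ → μ → ℂ, ∑ i, ∑ j, ∑ l, Φ i j l =
      ∑ t : ι × κ × μ, Φ t.1 t.2.1 t.2.2 := by
    intro Φ
    simp only [Fintype.sum_prod_type]
  simp only [e]
  simp only [sq, Finset.sum_mul_sum]
  rw [e2, Finset.sum_congr rfl fun x _ => Finset.sum_congr rfl fun y _ => e2 _, Finset.sum_comm]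
  refine Finset.sum_congr rfl fun x _ => ?_
  rw [Finset.sum_comm]

/-- **Lemma 3.2 (the structure constant `A_{(ab)(bc)(ac)}`).**  Let `a, b, c` be pairwise
distinct, and let `{f_i}`, `{g_j}`, `{h_k}` be orthonormal bases of `p_{ab}`, `p_{bc}`,
`p_{ac}` respectively, with respect to `⟨·,·⟩ = −B`.  Then
`Σ_{i,j,k} ⟨[f_i, g_j], h_k⟩² = 2 k_a k_b k_c/(n + 1)`. -/
theorem structure_constant_Aab_bc_ac (k : Fin 3 → ℕ) (hk : ∀ a, 1 ≤ k a)
    (a b c : Fin 3) (hab : a ≠ b) (hbc : b ≠ c) (hac : a ≠ c)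
    {ι κ μ : Type} [Fintype ι] [DecidableEq ι] [Fintype κ] [DecidableEq κ]
    [Fintype μ] [DecidableEq μ]
    (f : ι → Matrix (Fin (blockTotal k) ⊕ Fin (blockTotal k))
      (Fin (blockTotal k) ⊕ Fin (blockTotal k)) ℂ)
    (g : κ → Matrix (Fin (blockTotal k) ⊕ Fin (blockTotal k))
      (Fin (blockTotal k) ⊕ Fin (blockTotal k)) ℂ)
    (h : μ → Matrix (Fin (blockTotal k) ⊕ Fin (blockTotal k))
      (Fin (blockTotal k) ⊕ Fin (blockTotal k)) ℂ)
    (hf : ∀ i, f i ∈ pOff k a b)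
    (hfspan : ∀ Z ∈ pOff k a b, Z ∈ Submodule.span ℝ (Set.range f))
    (hfonb : ∀ i j, spInner k (f i) (f j) = if i = j then 1 else 0)
    (hg : ∀ i, g i ∈ pOff k b c)
    (hgspan : ∀ Z ∈ pOff k b c, Z ∈ Submodule.span ℝ (Set.range g))
    (hgonb : ∀ i j, spInner k (g i) (g j) = if i = j then 1 else 0)
    (hh : ∀ i, h i ∈ pOff k a c)
    (hhspan : ∀ Z ∈ pOff k a c, Z ∈ Submodule.span ℝ (Set.range h))
    (hhonb : ∀ i j, spInner k (h i) (h j) = if i = j then 1 else 0) :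
    ∑ i : ι, ∑ j : κ, ∑ l : μ, (spInner k (f i * g j - g j * f i) (h l)) ^ 2
      = 2 * (k a : ℂ) * (k b : ℂ) * (k c : ℂ) / ((blockTotal k : ℂ) + 1) := by
  have hN := nz k
  have step : ∀ i j l, (spInner k (f i * g j - g j * f i) (h l)) ^ 2 =
      (4 * ((blockTotal k : ℂ) + 1)) ^ 2 *
      (∑ x ∈ blF k a ×ˢ blF k b ×ˢ blF k c,
        f i x.1 x.2.1 * g j x.2.1 x.2.2 * h l x.2.2 x.1) ^ 2 := by
    intro i j l
    rw [← trace_blocks k a b c hab hbc hac _ _ _ (hf i) (hg j) (hh l), spInner, Matrix.sub_mul,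
      Matrix.trace_sub, trace_flip k (f i) (g j) (h l) (mem_props k _ _ (hf i)).1
      (mem_props k _ _ (hg j)).1 (mem_props k _ _ (hh l)).1]
    ring
  have hsymm : pOff k a c = pOff k c a := by rw [pOff, pOff, Set.pair_comm]
  rw [hsymm] at hhspan
  simp only [hsymm] at hh
  simp only [step, ← Finset.mul_sum]
  rw [sum_sq_expand (blF k a ×ˢ blF k b ×ˢ blF k c) (fun i x => f i x.1 x.2.1)
    (fun j x => g j x.2.1 x.2.2) (fun l x => h l x.2.2 x.1)]
  have hT : ∀ x ∈ blF k a ×ˢ blF k b ×ˢ blF k c, ∀ y ∈ blF k a ×ˢ blF k b ×ˢ blF k c,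
      (∑ i, f i x.1 x.2.1 * f i y.1 y.2.1) * (∑ j, g j x.2.1 x.2.2 * g j y.2.1 y.2.2) *
        (∑ l, h l x.2.2 x.1 * h l y.2.2 y.1) =
      (1 / (4 * ((blockTotal k : ℂ) + 1))) ^ 3 *
        (JJ (blockTotal k) x.1 y.1 ^ 2 * (JJ (blockTotal k) x.2.1 y.2.1 ^ 2 *
          JJ (blockTotal k) x.2.2 y.2.2 ^ 2)) := by
    rintro ⟨p, q, r⟩ hx ⟨p', q', r'⟩ hy
    simp only [blF, Finset.mem_product, Finset.mem_filter, Finset.mem_univ, true_and] at hx hy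
    obtain ⟨h1, h2, h3⟩ := hx
    obtain ⟨h4, h5, h6⟩ := hy
    simp only
    rw [entry_lemma k a b hab f hf hfspan hfonb p q p' q' h1 h2 h4,
      entry_lemma k b c hbc g hg hgspan hgonb q r q' r' h2 h3 h5,
      entry_lemma k c a hac.symm h hh hhspan hhonb r p r' p' h3 h1 h6]
    ring
  rw [Finset.sum_congr rfl fun x hx => Finset.sum_congr rfl fun y hy => hT x hx y hy]
  simp only [← Finset.mul_sum, Finset.sum_product]
  simp only [← Finset.mul_sum, ← Finset.sum_mul]
  rw [sum_J_sq, sum_J_sq, sum_J_sq]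
  field_simp
  ring
end

section
/- There exist at least four pairwise distinct quadruples (x1, x2, x12, x13) of positive real numbers solving the system f1 = f2 = f3 = f4 = 0 below and satisfying x13 ≠ 1; moreover they can be chosen so that their x13-coordinates are pairwise distinct, with two of them having x13 ∈ (0,1) and two having x13 ∈ (1,2). -/
/-- A quadruple `(x1, x2, x12, x13)` of positive reals solving the Einstein system for
`Ad(Sp(1)×Sp(1)×Sp(1))`-invariant metrics on `V₂ℍ³ = Sp(3)/Sp(1)` (normalized by
`x23 = 1`). -/
def IsEinsteinSolV2H3 (v : ℝ × ℝ × ℝ × ℝ) : Prop :=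
  let x1 := v.1; let x2 := v.2.1; let x12 := v.2.2.1; let x13 := v.2.2.2
  0 < x1 ∧ 0 < x2 ∧ 0 < x12 ∧ 0 < x13 ∧
  x1^2*x12^2*x2 + x1^2*x13^2*x2 - x1*x12^2*x13^2*x2^2 - 2*x1*x12^2*x13^2
    - x1*x13^2*x2^2 + 2*x12^2*x13^2*x2 = 0 ∧
  3*x1*x13*x2 - 2*x12^3*x2 + 2*x12^2*x13*x2^2 + 4*x12^2*x13 + 2*x12*x13^2*x2
    - 16*x12*x13*x2 + 2*x12*x2 + 5*x13*x2^2 = 0 ∧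
  3*x1*x12^2 - 3*x1*x13^2 + 4*x12^3*x13 - 16*x12^2*x13 - 4*x12*x13^3
    + 16*x12*x13^2 - 3*x13^2*x2 = 0 ∧
  -3*x1*x12 + 3*x12*x13^2*x2 - 16*x12*x13^2 + 16*x12*x13 + 4*x13^3 - 4*x13 = 0


open Finset

/-- The four Einstein polynomials as a self-map of `ℝ⁴`. -/
noncomputable def einF (v : Fin 4 → ℝ) : Fin 4 → ℝ :=
  ![v 0^2*v 2^2*v 1 + v 0^2*v 3^2*v 1 - v 0*v 2^2*v 3^2*v 1^2 - 2*v 0*v 2^2*v 3^2 - v 0*v 3^2*v 1^2 + 2*v 2^2*v 3^2*v 1,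
    3*v 0*v 3*v 1 - 2*v 2^3*v 1 + 2*v 2^2*v 3*v 1^2 + 4*v 2^2*v 3 + 2*v 2*v 3^2*v 1 - 16*v 2*v 3*v 1 + 2*v 2*v 1 + 5*v 3*v 1^2,
    3*v 0*v 2^2 - 3*v 0*v 3^2 + 4*v 2^3*v 3 - 16*v 2^2*v 3 - 4*v 2*v 3^3 + 16*v 2*v 3^2 - 3*v 3^2*v 1,
    -3*v 0*v 2 + 3*v 2*v 3^2*v 1 - 16*v 2*v 3^2 + 16*v 2*v 3 + 4*v 3^3 - 4*v 3]

/-- Terms with positive sign in the telescoped divided differences of `einF`. -/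
noncomputable def einDp (v w : Fin 4 → ℝ) : Fin 4 → Fin 4 → ℝ :=
  ![![(w 0 + v 0)*v 1*v 2^2 + (w 0 + v 0)*v 1*v 3^2,
      w 0^2*v 2^2 + w 0^2*v 3^2 + 2*v 2^2*v 3^2,
      w 0^2*w 1*(w 2 + v 2) + 2*w 1*(w 2 + v 2)*v 3^2,
      w 0^2*w 1*(w 3 + v 3) + 2*w 1*w 2^2*(w 3 + v 3)],
    ![3*v 1*v 3,
      3*w 0*v 3 + 2*(w 1 + v 1)*v 2^2*v 3 + 2*v 2*v 3^2 + 2*v 2 + 5*(w 1 + v 1)*v 3,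
      2*w 1^2*(w 2 + v 2)*v 3 + 4*(w 2 + v 2)*v 3 + 2*w 1*v 3^2 + 2*w 1,
      3*w 0*w 1 + 2*w 1^2*w 2^2 + 4*w 2^2 + 2*w 1*w 2*(w 3 + v 3) + 5*w 1^2],
    ![3*v 2^2,
      0,
      3*w 0*(w 2 + v 2) + 4*(w 2^2 + v 2*w 2 + v 2^2)*v 3 + 16*v 3^2,
      4*w 2^3 + 16*w 2*(w 3 + v 3)],
    ![0,
      3*v 2*v 3^2,
      3*w 1*v 3^2 + 16*v 3,
      3*w 1*w 2*(w 3 + v 3) + 16*w 2 + 4*(w 3^2 + v 3*w 3 + v 3^2)]]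

/-- Terms with negative sign in the telescoped divided differences of `einF`. -/
noncomputable def einDm (v w : Fin 4 → ℝ) : Fin 4 → Fin 4 → ℝ :=
  ![![v 1^2*v 2^2*v 3^2 + 2*v 2^2*v 3^2 + v 1^2*v 3^2,
      w 0*(w 1 + v 1)*v 2^2*v 3^2 + w 0*(w 1 + v 1)*v 3^2,
      w 0*w 1^2*(w 2 + v 2)*v 3^2 + 2*w 0*(w 2 + v 2)*v 3^2,
      w 0*w 1^2*w 2^2*(w 3 + v 3) + 2*w 0*w 2^2*(w 3 + v 3) + w 0*w 1^2*(w 3 + v 3)],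
    ![0,
      2*v 2^3 + 16*v 2*v 3,
      2*w 1*(w 2^2 + v 2*w 2 + v 2^2) + 16*w 1*v 3,
      16*w 1*w 2],
    ![3*v 3^2,
      3*v 3^2,
      16*(w 2 + v 2)*v 3 + 4*v 3^3,
      3*w 0*(w 3 + v 3) + 16*w 2^2 + 4*w 2*(w 3^2 + v 3*w 3 + v 3^2) + 3*w 1*(w 3 + v 3)],
    ![3*v 2,
      0,
      3*w 0 + 16*v 3^2,
      16*w 2*(w 3 + v 3) + 4]]

theorem einDp_mono (v w p q : Fin 4 → ℝ) (hv : ∀ i, 0 < v i) (hw : ∀ i, 0 < w i)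
    (hvv : ∀ i, v i ≤ p i) (hww : ∀ i, w i ≤ q i) (k j : Fin 4) :
    einDp v w k j ≤ einDp p q k j := by
  have a0 := hv 0; have a1 := hv 1; have a2 := hv 2; have a3 := hv 3
  have b0 := hw 0; have b1 := hw 1; have b2 := hw 2; have b3 := hw 3
  have c0 := hvv 0; have c1 := hvv 1; have c2 := hvv 2; have c3 := hvv 3
  have d0 := hww 0; have d1 := hww 1; have d2 := hww 2; have d3 := hww 3
  have aa0 := a0.trans_le c0; have aa1 := a1.trans_le c1
  have aa2 := a2.trans_le c2; have aa3 := a3.trans_le c3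
  have bb0 := b0.trans_le d0; have bb1 := b1.trans_le d1
  have bb2 := b2.trans_le d2; have bb3 := b3.trans_le d3
  fin_cases k <;> fin_cases j <;> simp [einDp, -add_le_add_iff_left, -add_le_add_iff_right,
    -mul_le_mul_iff_right₀, -mul_le_mul_iff_left₀] <;> gcongr

theorem einDm_mono (v w p q : Fin 4 → ℝ) (hv : ∀ i, 0 < v i) (hw : ∀ i, 0 < w i)
    (hvv : ∀ i, v i ≤ p i) (hww : ∀ i, w i ≤ q i) (k j : Fin 4) :
    einDm v w k j ≤ einDm p q k j := by
  have a0 := hv 0; have a1 := hv 1; have a2 := hv 2; have a3 := hv 3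
  have b0 := hw 0; have b1 := hw 1; have b2 := hw 2; have b3 := hw 3
  have c0 := hvv 0; have c1 := hvv 1; have c2 := hvv 2; have c3 := hvv 3
  have d0 := hww 0; have d1 := hww 1; have d2 := hww 2; have d3 := hww 3
  have aa0 := a0.trans_le c0; have aa1 := a1.trans_le c1
  have aa2 := a2.trans_le c2; have aa3 := a3.trans_le c3
  have bb0 := b0.trans_le d0; have bb1 := b1.trans_le d1
  have bb2 := b2.trans_le d2; have bb3 := b3.trans_le d3
  fin_cases k <;> fin_cases j <;> simp [einDm, -add_le_add_iff_left, -add_le_add_iff_right,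
    -mul_le_mul_iff_right₀, -mul_le_mul_iff_left₀] <;> gcongr

theorem einF_sub (v w : Fin 4 → ℝ) (k : Fin 4) :
    einF v k - einF w k = ∑ j, (einDp v w k j - einDm v w k j) * (v j - w j) := by
  fin_cases k <;> simp [einF, einDp, einDm, Fin.sum_univ_four] <;> ring

/-- Newton-type existence: if `A` is an approximate inverse of the Jacobian `J` on the box,
then the simplified Newton map contracts, so `einF` has a zero in the box. -/
theorem ein_exists (c l h : Fin 4 → ℝ) (r e : ℝ) (A J : Fin 4 → Fin 4 → ℝ)
    (hr : 0 < r) (hl0 : ∀ i, 0 < l i) (hl : ∀ i, l i ≤ c i - r) (hh : ∀ i, c i + r ≤ h i)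
    (hup : ∀ k j, einDp h h k j - einDm l l k j ≤ J k j + e)
    (hlo : ∀ k j, J k j - e ≤ einDp l l k j - einDm h h k j)
    (hA : ∀ i, ∑ j, (|(if i = j then 1 else 0) - ∑ k, A i k * J k j| + ∑ k, |A i k| * e) ≤ 1/2)
    (hres : ∀ i, |∑ k, A i k * einF c k| ≤ r / 2)
    (hinj : ∀ y : Fin 4 → ℝ, (∀ i, ∑ k, A i k * y k = 0) → y = 0) :
    ∃ v : Fin 4 → ℝ, (∀ i, |v i - c i| ≤ r) ∧ einF v = 0 := by
  set T : (Fin 4 → ℝ) → (Fin 4 → ℝ) := fun v i => v i - ∑ k, A i k * einF v k with hT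
  have key : ∀ v ∈ Metric.closedBall c r, ∀ w ∈ Metric.closedBall c r,
      dist (T v) (T w) ≤ 1/2 * dist v w := by
    intro v hv w hw
    have box : ∀ u ∈ Metric.closedBall c r, ∀ i, l i ≤ u i ∧ u i ≤ h i := by
      intro u hu i
      have := (dist_le_pi_dist u c i).trans (Metric.mem_closedBall.1 hu)
      rw [Real.dist_eq, abs_le] at this
      constructor <;> linarith [hl i, hh i]
    have bv := box v hv
    have bw := box w hw
    have hD : ∀ k j, |einDp v w k j - einDm v w k j - J k j| ≤ e := by
      intro k j
      have pv : ∀ i, 0 < v i := fun i => (hl0 i).trans_le (bv i).1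
      have pw : ∀ i, 0 < w i := fun i => (hl0 i).trans_le (bw i).1
      have h1 := einDp_mono l l v w hl0 hl0 (fun i => (bv i).1) (fun i => (bw i).1) k j
      have h2 := einDp_mono v w h h pv pw (fun i => (bv i).2) (fun i => (bw i).2) k j
      have h3 := einDm_mono l l v w hl0 hl0 (fun i => (bv i).1) (fun i => (bw i).1) k j
      have h4 := einDm_mono v w h h pv pw (fun i => (bv i).2) (fun i => (bw i).2) k j
      rw [abs_le]
      constructor <;> linarith [hup k j, hlo k j]
    rw [dist_pi_le_iff (by positivity)]
    intro i
    have hid : T v i - T w i = ∑ j, (((if i = j then 1 else 0) - ∑ k, A i k * J k j)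
        - ∑ k, A i k * (einDp v w k j - einDm v w k j - J k j)) * (v j - w j) := by
      have e1 : T v i - T w i = (v i - w i) - ∑ k, A i k * (einF v k - einF w k) := by
        simp only [hT, mul_sub, Finset.sum_sub_distrib]; ring
      have e2 : v i - w i = ∑ j, (if i = j then 1 else 0) * (v j - w j) := by simp
      rw [e1, e2]
      simp only [einF_sub, Fin.sum_univ_four]
      ring
    rw [Real.dist_eq, hid]
    refine (Finset.abs_sum_le_sum_abs _ _).trans ?_
    refine le_trans ?_ (mul_le_mul_of_nonneg_right (hA i) dist_nonneg)
    rw [Finset.sum_mul]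
    refine Finset.sum_le_sum fun j _ => ?_
    rw [abs_mul]
    refine mul_le_mul ?_ ?_ (abs_nonneg _) ?_
    · refine (abs_sub _ _).trans (add_le_add le_rfl ?_)
      refine (Finset.abs_sum_le_sum_abs _ _).trans (Finset.sum_le_sum fun k _ => ?_)
      rw [abs_mul]
      exact mul_le_mul_of_nonneg_left (hD k j) (abs_nonneg _)
    · rw [← Real.dist_eq]; exact dist_le_pi_dist v w j
    · have he : 0 ≤ e := (abs_nonneg _).trans (hD 0 0)
      positivity
  have hc : c ∈ Metric.closedBall c r := Metric.mem_closedBall_self hr.le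
  have hTc : dist (T c) c ≤ r / 2 := by
    rw [dist_pi_le_iff (by positivity)]
    intro i
    have : T c i - c i = -∑ k, A i k * einF c k := by simp [hT]
    rw [Real.dist_eq, this, abs_neg]
    exact hres i
  have hmaps : Set.MapsTo T (Metric.closedBall c r) (Metric.closedBall c r) := by
    intro v hv
    have h1 := key v hv c hc
    have h2 := dist_triangle (T v) (T c) c
    rw [Metric.mem_closedBall] at hv ⊢
    linarith
  have hcon : ContractingWith (1/2) (hmaps.restrict T _ _) := by
    refine ⟨by rw [← NNReal.coe_lt_coe]; norm_num, ?_⟩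
    refine LipschitzWith.of_dist_le_mul fun x y => ?_
    have := key x x.2 y y.2
    simpa [Subtype.dist_eq] using this
  obtain ⟨v, hv, hfix, -⟩ := hcon.exists_fixedPoint' (s := Metric.closedBall c r)
    (Metric.isClosed_closedBall.isComplete) hmaps hc (edist_ne_top _ _)
  refine ⟨v, fun i => ?_, hinj _ fun i => ?_⟩
  · rw [← Real.dist_eq]
    exact (dist_le_pi_dist v c i).trans (Metric.mem_closedBall.1 hv)
  · have := congrFun hfix i
    simp only [hT] at this
    linarith

theorem ein_to_sol (v : Fin 4 → ℝ) (hp : ∀ i, 0 < v i) (h : einF v = 0) :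
    IsEinsteinSolV2H3 (v 0, v 1, v 2, v 3) := by
  have h0 := congrFun h 0
  have h1 := congrFun h 1
  have h2 := congrFun h 2
  have h3 := congrFun h 3
  simp only [einF, Pi.zero_apply, Matrix.cons_val] at h0 h1 h2 h3
  exact ⟨hp 0, hp 1, hp 2, hp 3, h0, h1, h2, h3⟩

/-- Package: an approximate solution with small radius gives positivity and `x13` location. -/
theorem ein_pack (c v : Fin 4 → ℝ) (hv : ∀ i, |v i - c i| ≤ 1/1000000) (h : einF v = 0)
    (hc : ∀ i, 1/1000 < c i) :
    IsEinsteinSolV2H3 (v 0, v 1, v 2, v 3) := by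
  refine ein_to_sol v (fun i => ?_) h
  have := abs_le.1 (hv i)
  linarith [hc i]

set_option maxHeartbeats 4000000 in
/-- Solution number 0. -/
theorem ein_sol0 : ∃ v : Fin 4 → ℝ, (∀ i, |v i - (![6907047/25000000, 2512669/10000000, 4608871/10000000, 28436143/50000000] : Fin 4 → ℝ) i| ≤ 1/1000000) ∧
    einF v = 0 := by
  apply ein_exists ![6907047/25000000, 2512669/10000000, 4608871/10000000, 28436143/50000000]
    ![3453511/12500000, 2512659/10000000, 4608861/10000000, 28436093/50000000]
    ![107923/390625, 2512679/10000000, 4608881/10000000, 28436193/50000000] (1/1000000) (1/200)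
    ![![-8173/500, -1521/1000, -81/250, -79/1000],
      ![-2717/500, -261/200, -187/1000, -3/200],
      ![-9361/1000, -107/125, -27/1000, 67/200],
      ![-7523/500, -1819/1000, 37/100, 151/500]]
    ![![-439/5000, 1239/10000, -3/1250, -143/10000],
      ![4287/10000, -11479/10000, 443/2000, -189/1000],
      ![-3331/10000, -9703/10000, -17347/10000, 4479/2500],
      ![-13827/10000, 559/1250, 16697/5000, -737/1000]]
  · norm_num
  · intro i; fin_cases i <;> norm_num
  · intro i; fin_cases i <;> norm_num
  · intro i; fin_cases i <;> norm_num
  · intro k j; fin_cases k <;> fin_cases j <;> 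
      (simp only [einDp, einDm, Fin.zero_eta, Fin.mk_one, Fin.reduceFinMk, Fin.isValue, Matrix.cons_val]; norm_num)
  · intro k j; fin_cases k <;> fin_cases j <;> 
      (simp only [einDp, einDm, Fin.zero_eta, Fin.mk_one, Fin.reduceFinMk, Fin.isValue, Matrix.cons_val]; norm_num)
  · intro i; fin_cases i <;> 
      (simp only [Fin.sum_univ_four, Fin.reduceEq, if_true, if_false, Fin.zero_eta, Fin.mk_one, Fin.reduceFinMk, Fin.isValue, Matrix.cons_val]; norm_num [abs_of_pos, abs_of_neg])
  · intro i; fin_cases i <;> 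
      (simp only [Fin.sum_univ_four, einF, Fin.zero_eta, Fin.mk_one, Fin.reduceFinMk, Fin.isValue, Matrix.cons_val]; norm_num [abs_le])
  · intro y hy
    have h0 := hy 0
    have h1 := hy 1
    have h2 := hy 2
    have h3 := hy 3
    simp only [Fin.sum_univ_four, Matrix.cons_val] at h0 h1 h2 h3
    ext i
    fin_cases i <;> simp only [Fin.zero_eta, Fin.mk_one, Fin.reduceFinMk, Pi.zero_apply] <;>
      linarith

set_option maxHeartbeats 4000000 in
/-- Solution number 1. -/
theorem ein_sol1 : ∃ v : Fin 4 → ℝ, (∀ i, |v i - (![111224973/100000000, 41793723/100000000, 3197483/2000000, 59577629/100000000] : Fin 4 → ℝ) i| ≤ 1/1000000) ∧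
    einF v = 0 := by
  apply ein_exists ![111224973/100000000, 41793723/100000000, 3197483/2000000, 59577629/100000000]
    ![111224873/100000000, 41793623/100000000, 3197481/2000000, 59577529/100000000]
    ![111225073/100000000, 41793823/100000000, 639497/400000, 59577729/100000000] (1/1000000) (1/200)
    ![![0, -13/500, 39/1000, -159/1000],
      ![-1/20, -53/500, -19/1000, -1/20],
      ![-511/1000, -87/500, 23/125, 31/200],
      ![-257/1000, -99/1000, -9/500, -77/1000]]
    ![![6713/10000, 42421/10000, -1433/10000, -44363/10000],
      ![747/1000, -24113/2000, -4877/5000, 42863/10000],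
      ![66031/10000, -1331/1250, 16481/5000, -127/20],
      ![-23981/5000, 1064/625, 1923/2000, -563/250]]
  · norm_num
  · intro i; fin_cases i <;> norm_num
  · intro i; fin_cases i <;> norm_num
  · intro i; fin_cases i <;> norm_num
  · intro k j; fin_cases k <;> fin_cases j <;> 
      (simp only [einDp, einDm, Fin.zero_eta, Fin.mk_one, Fin.reduceFinMk, Fin.isValue, Matrix.cons_val]; norm_num)
  · intro k j; fin_cases k <;> fin_cases j <;> 
      (simp only [einDp, einDm, Fin.zero_eta, Fin.mk_one, Fin.reduceFinMk, Fin.isValue, Matrix.cons_val]; norm_num)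
  · intro i; fin_cases i <;> 
      (simp only [Fin.sum_univ_four, Fin.reduceEq, if_true, if_false, Fin.zero_eta, Fin.mk_one, Fin.reduceFinMk, Fin.isValue, Matrix.cons_val]; norm_num [abs_of_pos, abs_of_neg])
  · intro i; fin_cases i <;> 
      (simp only [Fin.sum_univ_four, einF, Fin.zero_eta, Fin.mk_one, Fin.reduceFinMk, Fin.isValue, Matrix.cons_val]; norm_num [abs_le])
  · intro y hy
    have h0 := hy 0
    have h1 := hy 1
    have h2 := hy 2
    have h3 := hy 3
    simp only [Fin.sum_univ_four, Matrix.cons_val] at h0 h1 h2 h3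
    ext i
    fin_cases i <;> simp only [Fin.zero_eta, Fin.mk_one, Fin.reduceFinMk, Pi.zero_apply] <;>
      linarith

set_option maxHeartbeats 4000000 in
/-- Solution number 2. -/
theorem ein_sol2 : ∃ v : Fin 4 → ℝ, (∀ i, |v i - (![70150027/100000000, 37337831/20000000, 134172971/50000000, 167848237/100000000] : Fin 4 → ℝ) i| ≤ 1/1000000) ∧
    einF v = 0 := by
  apply ein_exists ![70150027/100000000, 37337831/20000000, 134172971/50000000, 167848237/100000000]
    ![70149927/100000000, 37337811/20000000, 134172921/50000000, 167848137/100000000]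
    ![70150127/100000000, 37337851/20000000, 134173021/50000000, 167848337/100000000] (1/1000000) (1/200)
    ![![-11/1000, -3/1000, -1/1000, -3/1000],
      ![0, 13/1000, 9/1000, 7/250],
      ![1/200, 7/1000, 29/1000, 3/1000],
      ![3/1000, 13/1000, 1/250, -17/1000]]
    ![![-474301/5000, -150121/10000, 32047/10000, -19707/2500],
      ![47003/5000, 174499/5000, -88591/5000, 134583/2500],
      ![13151/1000, -84519/10000, 9591/250, -25941/2500],
      ![-10063/1250, 56701/2500, -11367/2500, -20937/1000]]
  · norm_num
  · intro i; fin_cases i <;> norm_num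
  · intro i; fin_cases i <;> norm_num
  · intro i; fin_cases i <;> norm_num
  · intro k j; fin_cases k <;> fin_cases j <;> 
      (simp only [einDp, einDm, Fin.zero_eta, Fin.mk_one, Fin.reduceFinMk, Fin.isValue, Matrix.cons_val]; norm_num)
  · intro k j; fin_cases k <;> fin_cases j <;> 
      (simp only [einDp, einDm, Fin.zero_eta, Fin.mk_one, Fin.reduceFinMk, Fin.isValue, Matrix.cons_val]; norm_num)
  · intro i; fin_cases i <;> 
      (simp only [Fin.sum_univ_four, Fin.reduceEq, if_true, if_false, Fin.zero_eta, Fin.mk_one, Fin.reduceFinMk, Fin.isValue, Matrix.cons_val]; norm_num [abs_of_pos, abs_of_neg])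
  · intro i; fin_cases i <;> 
      (simp only [Fin.sum_univ_four, einF, Fin.zero_eta, Fin.mk_one, Fin.reduceFinMk, Fin.isValue, Matrix.cons_val]; norm_num [abs_le])
  · intro y hy
    have h0 := hy 0
    have h1 := hy 1
    have h2 := hy 2
    have h3 := hy 3
    simp only [Fin.sum_univ_four, Matrix.cons_val] at h0 h1 h2 h3
    ext i
    fin_cases i <;> simp only [Fin.zero_eta, Fin.mk_one, Fin.reduceFinMk, Pi.zero_apply] <;>
      linarith

set_option maxHeartbeats 4000000 in
/-- Solution number 3. -/
theorem ein_sol3 : ∃ v : Fin 4 → ℝ, (∀ i, |v i - (![5522613/12500000, 48579351/100000000, 81038961/100000000, 87916283/50000000] : Fin 4 → ℝ) i| ≤ 1/1000000) ∧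
    einF v = 0 := by
  apply ein_exists ![5522613/12500000, 48579351/100000000, 81038961/100000000, 87916283/50000000]
    ![11045201/25000000, 48579251/100000000, 81038861/100000000, 87916233/50000000]
    ![11045251/25000000, 48579451/100000000, 81039061/100000000, 87916333/50000000] (1/1000000) (1/200)
    ![![-257/1000, -21/250, -37/1000, -3/1000],
      ![31/1000, -107/1000, -53/1000, -1/1000],
      ![17/100, 103/1000, -17/500, -11/250],
      ![241/500, 107/200, -17/250, 21/500]]
    ![![-18303/5000, 12969/5000, 9/125, -177/2500],
      ![41/16, -41153/10000, 2847/2500, 12307/10000],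
      ![-73049/10000, -92751/10000, -18701/10000, -6583/2500],
      ![-3039/1250, 15033/2000, -90769/5000, 46223/10000]]
  · norm_num
  · intro i; fin_cases i <;> norm_num
  · intro i; fin_cases i <;> norm_num
  · intro i; fin_cases i <;> norm_num
  · intro k j; fin_cases k <;> fin_cases j <;> 
      (simp only [einDp, einDm, Fin.zero_eta, Fin.mk_one, Fin.reduceFinMk, Fin.isValue, Matrix.cons_val]; norm_num)
  · intro k j; fin_cases k <;> fin_cases j <;> 
      (simp only [einDp, einDm, Fin.zero_eta, Fin.mk_one, Fin.reduceFinMk, Fin.isValue, Matrix.cons_val]; norm_num)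
  · intro i; fin_cases i <;> 
      (simp only [Fin.sum_univ_four, Fin.reduceEq, if_true, if_false, Fin.zero_eta, Fin.mk_one, Fin.reduceFinMk, Fin.isValue, Matrix.cons_val]; norm_num [abs_of_pos, abs_of_neg])
  · intro i; fin_cases i <;> 
      (simp only [Fin.sum_univ_four, einF, Fin.zero_eta, Fin.mk_one, Fin.reduceFinMk, Fin.isValue, Matrix.cons_val]; norm_num [abs_le])
  · intro y hy
    have h0 := hy 0
    have h1 := hy 1
    have h2 := hy 2
    have h3 := hy 3
    simp only [Fin.sum_univ_four, Matrix.cons_val] at h0 h1 h2 h3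
    ext i
    fin_cases i <;> simp only [Fin.zero_eta, Fin.mk_one, Fin.reduceFinMk, Pi.zero_apply] <;>
      linarith

theorem four_new_einstein_V2H3 :
    ∃ v : Fin 4 → ℝ × ℝ × ℝ × ℝ,
      (∀ i, IsEinsteinSolV2H3 (v i)) ∧
      (∀ i j, i ≠ j → v i ≠ v j) ∧
      (∀ i j, i ≠ j → (v i).2.2.2 ≠ (v j).2.2.2) ∧
      (∀ i, (v i).2.2.2 ≠ 1) ∧
      (v 0).2.2.2 ∈ Set.Ioo (0 : ℝ) 1 ∧ (v 1).2.2.2 ∈ Set.Ioo (0 : ℝ) 1 ∧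
      (v 2).2.2.2 ∈ Set.Ioo (1 : ℝ) 2 ∧ (v 3).2.2.2 ∈ Set.Ioo (1 : ℝ) 2 := by
  obtain ⟨a, ha, fa⟩ := ein_sol0
  obtain ⟨b, hb, fb⟩ := ein_sol1
  obtain ⟨c, hc, fc⟩ := ein_sol2
  obtain ⟨d, hd, fd⟩ := ein_sol3
  have sa := ein_pack _ a ha fa (by intro i; fin_cases i <;> norm_num)
  have sb := ein_pack _ b hb fb (by intro i; fin_cases i <;> norm_num)
  have sc := ein_pack _ c hc fc (by intro i; fin_cases i <;> norm_num)
  have sd := ein_pack _ d hd fd (by intro i; fin_cases i <;> norm_num)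
  have a3 := abs_le.1 (ha 3)
  have b3 := abs_le.1 (hb 3)
  have c3 := abs_le.1 (hc 3)
  have d3 := abs_le.1 (hd 3)
  simp only [Matrix.cons_val] at a3 b3 c3 d3
  have a4 : a 3 < 58/100 := by linarith [a3.2]
  have a5 : 0 < a 3 := by linarith [a3.1]
  have b4 : b 3 < 6/10 := by linarith [b3.2]
  have b5 : 59/100 < b 3 := by linarith [b3.1]
  have c4 : c 3 < 17/10 := by linarith [c3.2]
  have c5 : 16/10 < c 3 := by linarith [c3.1]
  have d4 : d 3 < 18/10 := by linarith [d3.2]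
  have d5 : 175/100 < d 3 := by linarith [d3.1]
  clear ha hb hc hd a3 b3 c3 d3
  let v : Fin 4 → ℝ × ℝ × ℝ × ℝ := ![(a 0, a 1, a 2, a 3), (b 0, b 1, b 2, b 3),
    (c 0, c 1, c 2, c 3), (d 0, d 1, d 2, d 3)]
  have hdist : ∀ i j, i ≠ j → (v i).2.2.2 ≠ (v j).2.2.2 := by
    have hmono : StrictMono fun i => (v i).2.2.2 := by
      rw [Fin.strictMono_iff_lt_succ]
      intro i
      fin_cases i
      · change a 3 < b 3; linarith
      · change b 3 < c 3; linarith
      · change c 3 < d 3; linarith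
    intro i j hij h
    exact hij (hmono.injective h)
  refine ⟨v, ?_, fun i j hij h => hdist i j hij (by rw [h]), hdist, ?_, ?_, ?_, ?_, ?_⟩
  · intro i
    fin_cases i
    exacts [sa, sb, sc, sd]
  · intro i
    fin_cases i
    · change a 3 ≠ 1; intro h; linarith
    · change b 3 ≠ 1; intro h; linarith
    · change c 3 ≠ 1; intro h; linarith
    · change d 3 ≠ 1; intro h; linarith
  · change 0 < a 3 ∧ a 3 < 1; constructor <;> linarith
  · change 0 < b 3 ∧ b 3 < 1; constructor <;> linarith
  · change 1 < c 3 ∧ c 3 < 2; constructor <;> linarith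
  · change 1 < d 3 ∧ d 3 < 2; constructor <;> linarith
end

section
/- There exist at least eight pairwise distinct quadruples (x1, x2, x12, x13) of positive real numbers solving the system g1 = g2 = g3 = g4 = 0 below: four of them with x13 ≠ 1 and pairwise distinct x13-coordinates (two with x13 ∈ (0,1) and two with x13 ∈ (1,2)); two of the form (t, t, t, 1) with distinct positive values of t; and two of the form (a, a, b, 1) with positive a ≠ b, for two distinct pairs (a, b). -/
/-- A quadruple `(x1, x2, x12, x13)` of positive reals solving the Einstein system
`g1 = g2 = g3 = g4 = 0` for `Ad(Sp(1)×Sp(1)×Sp(2))`-invariant metrics on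
`V₂ℍ⁴ = Sp(4)/Sp(2)` (normalized by `x23 = 1`). -/
def IsEinsteinSolV2H4 (v : ℝ × ℝ × ℝ × ℝ) : Prop :=
  let x1 := v.1; let x2 := v.2.1; let x12 := v.2.2.1; let x13 := v.2.2.2
  0 < x1 ∧ 0 < x2 ∧ 0 < x12 ∧ 0 < x13 ∧
  2*x1^2*x12^2*x2 + x1^2*x13^2*x2 - 2*x1*x12^2*x13^2*x2^2 - 2*x1*x12^2*x13^2
    - x1*x13^2*x2^2 + 2*x12^2*x13^2*x2 = 0 ∧
  3*x1*x13*x2 - 4*x12^3*x2 + 4*x12^2*x13*x2^2 + 4*x12^2*x13 + 4*x12*x13^2*x2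
    - 20*x12*x13*x2 + 4*x12*x2 + 5*x13*x2^2 = 0 ∧
  3*x1*x12^2 - 3*x1*x13^2 + 6*x12^3*x13 - 20*x12^2*x13 - 6*x12*x13^3
    + 20*x12*x13^2 - 2*x12*x13 - 3*x13^2*x2 = 0 ∧
  -3*x1*x12 + 3*x12*x13^2*x2 - 20*x12*x13^2 + 20*x12*x13 + 4*x13^3 - 4*x13 = 0


/-- Polynomial expressions in four variables. -/
inductive E : Type
  | X : Fin 4 → E
  | C : ℚ → E
  | add : E → E → E
  | mul : E → E → E

def E.eval (x : Fin 4 → ℝ) : E → ℝ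
  | .X i => x i
  | .C q => (q : ℝ)
  | .add e f => e.eval x + f.eval x
  | .mul e f => e.eval x * f.eval x

def qabs (q : ℚ) : ℚ := if q < 0 then -q else q

theorem qabs_cast (q : ℚ) : ((qabs q : ℚ) : ℝ) = |(q : ℝ)| := by
  unfold qabs
  split_ifs with h
  · have : (q : ℝ) < 0 := by exact_mod_cast h
    rw [abs_of_neg this]; push_cast; ring
  · have : (0 : ℝ) ≤ q := by exact_mod_cast not_lt.1 h
    rw [abs_of_nonneg this]

/-- First-order Taylor model: value at the centre, linear coefficients, and a Lipschitz
constant for the remainder. -/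
structure TM where
  v : ℚ
  a0 : ℚ
  a1 : ℚ
  a2 : ℚ
  a3 : ℚ
  L : ℚ

def TM.s (m : TM) : ℚ := qabs m.a0 + qabs m.a1 + qabs m.a2 + qabs m.a3 + m.L

def vec4 {α : Type} (c0 c1 c2 c3 : α) (i : Fin 4) : α :=
  match i with
  | 0 => c0
  | 1 => c1
  | 2 => c2
  | 3 => c3

def rad : ℚ := 1 / 1000000

def TM.add (m n : TM) : TM :=
  ⟨m.v + n.v, m.a0 + n.a0, m.a1 + n.a1, m.a2 + n.a2, m.a3 + n.a3, m.L + n.L⟩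

def TM.mul (m n : TM) : TM :=
  ⟨m.v * n.v, m.v * n.a0 + n.v * m.a0, m.v * n.a1 + n.v * m.a1, m.v * n.a2 + n.v * m.a2,
    m.v * n.a3 + n.v * m.a3,
    qabs m.v * n.L + qabs n.v * m.L + 2 * m.s * n.s * rad⟩

def E.tm (c0 c1 c2 c3 : ℚ) : E → TM
  | .X i => ⟨vec4 c0 c1 c2 c3 i, vec4 1 0 0 0 i, vec4 0 1 0 0 i, vec4 0 0 1 0 i,
      vec4 0 0 0 1 i, 0⟩
  | .C q => ⟨q, 0, 0, 0, 0, 0⟩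
  | .add e f => (e.tm c0 c1 c2 c3).add (f.tm c0 c1 c2 c3)
  | .mul e f => (e.tm c0 c1 c2 c3).mul (f.tm c0 c1 c2 c3)

def Box (c x : Fin 4 → ℝ) : Prop := ∀ i, |x i - c i| ≤ (rad : ℝ)

structure Sound (c : Fin 4 → ℝ) (m : TM) (f : (Fin 4 → ℝ) → ℝ) : Prop where
  pos : (0 : ℝ) ≤ m.L
  val : f c = m.v
  lip : ∀ x y δ, Box c x → Box c y → (∀ i, |x i - y i| ≤ δ) →
    |f x - f y - (m.a0 * (x 0 - y 0) + m.a1 * (x 1 - y 1) + m.a2 * (x 2 - y 2)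
      + m.a3 * (x 3 - y 3))| ≤ m.L * δ

theorem rad_nonneg : (0 : ℝ) ≤ (rad : ℝ) := by norm_num [rad]

theorem box_self (c : Fin 4 → ℝ) : Box c c := fun i => by simpa using rad_nonneg

theorem TM.s_cast (m : TM) : ((m.s : ℚ) : ℝ) =
    |(m.a0 : ℝ)| + |(m.a1 : ℝ)| + |(m.a2 : ℝ)| + |(m.a3 : ℝ)| + m.L := by
  simp [TM.s, qabs_cast]

theorem Sound.diff {c m f} (h : Sound c m f) (x y : Fin 4 → ℝ) (δ : ℝ) (hx : Box c x)
    (hy : Box c y) (hd : ∀ i, |x i - y i| ≤ δ) : |f x - f y| ≤ m.s * δ := by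
  have h1 := h.lip x y δ hx hy hd
  have key : ∀ (a : ℚ) i, |(a : ℝ) * (x i - y i)| ≤ |(a : ℝ)| * δ := fun a i => by
    rw [abs_mul]; exact mul_le_mul_of_nonneg_left (hd i) (abs_nonneg _)
  have k0 := abs_le.1 (key m.a0 0)
  have k1 := abs_le.1 (key m.a1 1)
  have k2 := abs_le.1 (key m.a2 2)
  have k3 := abs_le.1 (key m.a3 3)
  have h2 := abs_le.1 h1
  rw [TM.s_cast, abs_le]
  constructor <;> linarith

theorem Sound.near {c m f} (h : Sound c m f) (x : Fin 4 → ℝ) (hx : Box c x) :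
    |f x - m.v| ≤ m.s * rad := by
  rw [← h.val]
  exact h.diff x c rad hx (box_self c) hx

theorem Sound.s_nonneg {c m f} (h : Sound c m f) : (0 : ℝ) ≤ (m.s : ℝ) := by
  have := h.pos
  rw [TM.s_cast]; positivity

theorem Sound.mul {c m n f g} (hf : Sound c m f) (hg : Sound c n g) :
    Sound c (m.mul n) (fun x => f x * g x) where
  pos := by
    have := hf.pos
    have := hg.pos
    have := hf.s_nonneg
    have := hg.s_nonneg
    have := rad_nonneg
    simp only [TM.mul]
    push_cast
    simp only [qabs_cast]
    positivity
  val := by simp [TM.mul, hf.val, hg.val]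
  lip := by
    intro x y δ hx hy hd
    have hδ : 0 ≤ δ := (abs_nonneg _).trans (hd 0)
    have f1 := hf.lip x y δ hx hy hd
    have g1 := hg.lip x y δ hx hy hd
    have f2 := hf.diff x y δ hx hy hd
    have g2 := hg.diff x y δ hx hy hd
    have f3 := hf.near x hx
    have g3 := hg.near y hy
    have p1 := hf.s_nonneg
    have p2 := hg.s_nonneg
    have r0 := rad_nonneg
    simp only [TM.mul]
    push_cast
    simp only [qabs_cast]
    set A := f x - f y - (m.a0 * (x 0 - y 0) + m.a1 * (x 1 - y 1) + m.a2 * (x 2 - y 2)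
      + m.a3 * (x 3 - y 3)) with hA
    set B := g x - g y - (n.a0 * (x 0 - y 0) + n.a1 * (x 1 - y 1) + n.a2 * (x 2 - y 2)
      + n.a3 * (x 3 - y 3)) with hB
    have t1 : |(m.v : ℝ) * B| ≤ |(m.v : ℝ)| * (n.L * δ) := by
      rw [abs_mul]; exact mul_le_mul_of_nonneg_left g1 (abs_nonneg _)
    have t2 : |(n.v : ℝ) * A| ≤ |(n.v : ℝ)| * (m.L * δ) := by
      rw [abs_mul]; exact mul_le_mul_of_nonneg_left f1 (abs_nonneg _)
    have t3 : |(f x - m.v) * (g x - g y)| ≤ (m.s * rad) * (n.s * δ) := by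
      rw [abs_mul]; exact mul_le_mul f3 g2 (abs_nonneg _) (by positivity)
    have t4 : |(g y - n.v) * (f x - f y)| ≤ (n.s * rad) * (m.s * δ) := by
      rw [abs_mul]; exact mul_le_mul g3 f2 (abs_nonneg _) (by positivity)
    have e : f x * g x - f y * g y - ((m.v * n.a0 + n.v * m.a0) * (x 0 - y 0)
        + (m.v * n.a1 + n.v * m.a1) * (x 1 - y 1) + (m.v * n.a2 + n.v * m.a2) * (x 2 - y 2)
        + (m.v * n.a3 + n.v * m.a3) * (x 3 - y 3))
        = m.v * B + n.v * A + (f x - m.v) * (g x - g y) + (g y - n.v) * (f x - f y) := by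
      rw [hA, hB]; ring
    rw [e]
    have s1 := abs_le.1 t1
    have s2 := abs_le.1 t2
    have s3 := abs_le.1 t3
    have s4 := abs_le.1 t4
    rw [abs_le]
    constructor <;> linarith

theorem Sound.add {c m n f g} (hf : Sound c m f) (hg : Sound c n g) :
    Sound c (m.add n) (fun x => f x + g x) where
  pos := by
    have := hf.pos
    have := hg.pos
    simp only [TM.add]
    push_cast
    positivity
  val := by simp [TM.add, hf.val, hg.val]
  lip := by
    intro x y δ hx hy hd
    have f1 := abs_le.1 (hf.lip x y δ hx hy hd)
    have g1 := abs_le.1 (hg.lip x y δ hx hy hd)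
    simp only [TM.add]
    push_cast
    rw [abs_le]
    constructor <;> linarith

theorem E.sound (c0 c1 c2 c3 : ℚ) (e : E) :
    Sound (fun i => ((vec4 c0 c1 c2 c3 i : ℚ) : ℝ)) (e.tm c0 c1 c2 c3) (fun x => e.eval x) := by
  induction e with
  | X i =>
    refine ⟨by simp [E.tm], by simp [E.tm, E.eval], ?_⟩
    intro x y δ _ _ _
    fin_cases i <;> simp [E.tm, E.eval, vec4]
  | C q => exact ⟨by simp [E.tm], by simp [E.tm, E.eval], by intros; simp [E.tm, E.eval]⟩
  | add e f he hf => exact he.add hf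
  | mul e f he hf => exact he.mul hf

/-- Boolean-style check that `t` is contracting and keeps the box coordinate. -/
def good (c : ℚ) (m : TM) : Prop := m.s ≤ 1 / 2 ∧ qabs (m.v - c) ≤ rad / 2

instance (c : ℚ) (m : TM) : Decidable (good c m) := by unfold good; infer_instance

theorem exists_zero (c0 c1 c2 c3 : ℚ) (t0 t1 t2 t3 : E)
    (h : good c0 (t0.tm c0 c1 c2 c3) ∧ good c1 (t1.tm c0 c1 c2 c3) ∧
      good c2 (t2.tm c0 c1 c2 c3) ∧ good c3 (t3.tm c0 c1 c2 c3)) :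
    ∃ x : Fin 4 → ℝ, (∀ i, |x i - ((vec4 c0 c1 c2 c3 i : ℚ) : ℝ)| ≤ 1 / 1000000) ∧
      ∀ i, (vec4 t0 t1 t2 t3 i).eval x = x i := by
  set c : Fin 4 → ℝ := fun i => ((vec4 c0 c1 c2 c3 i : ℚ) : ℝ) with hc
  set t := vec4 t0 t1 t2 t3 with ht
  have hr : (rad : ℝ) = 1 / 1000000 := by norm_num [rad]
  have hg : ∀ i, good (vec4 c0 c1 c2 c3 i) ((t i).tm c0 c1 c2 c3) := by
    intro i
    fin_cases i
    exacts [h.1, h.2.1, h.2.2.1, h.2.2.2]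
  let f : (Fin 4 → ℝ) → (Fin 4 → ℝ) := fun x i => (t i).eval x
  have hs : ∀ i, ((((t i).tm c0 c1 c2 c3).s : ℚ) : ℝ) ≤ 1 / 2 := fun i => by
    have := (hg i).1
    have h2 : ((((t i).tm c0 c1 c2 c3).s : ℚ) : ℝ) ≤ ((1 / 2 : ℚ) : ℝ) := by exact_mod_cast this
    simpa using h2
  have hv : ∀ i, |((((t i).tm c0 c1 c2 c3).v : ℚ) : ℝ) - c i| ≤ rad / 2 := fun i => by
    have := (hg i).2
    have h2 : ((qabs (((t i).tm c0 c1 c2 c3).v - vec4 c0 c1 c2 c3 i) : ℚ) : ℝ)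
      ≤ ((rad / 2 : ℚ) : ℝ) := by exact_mod_cast this
    rw [qabs_cast] at h2
    push_cast at h2
    exact h2
  have hbox : ∀ x, x ∈ Metric.closedBall c (rad : ℝ) ↔ Box c x := fun x => by
    rw [Metric.mem_closedBall, dist_pi_le_iff rad_nonneg]
    rfl
  have hmaps : Set.MapsTo f (Metric.closedBall c (rad : ℝ)) (Metric.closedBall c (rad : ℝ)) := by
    intro x hx
    rw [hbox] at hx ⊢
    intro i
    have n1 := abs_le.1 (((t i).sound c0 c1 c2 c3).near x hx)
    have n2 := abs_le.1 (hv i)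
    have n3 := mul_le_mul_of_nonneg_right (hs i) rad_nonneg
    change |(t i).eval x - c i| ≤ _
    rw [abs_le]
    constructor <;> linarith
  have hcon : ContractingWith (1 / 2) (hmaps.restrict f _ _) := by
    refine ⟨?_, ?_⟩
    · rw [← NNReal.coe_lt_coe]; norm_num
    · refine LipschitzWith.of_dist_le_mul ?_
      rintro ⟨x, hx⟩ ⟨y, hy⟩
      rw [hbox] at hx hy
      change dist (f x) (f y) ≤ _ * dist x y
      have hd : 0 ≤ dist x y := dist_nonneg
      rw [dist_pi_le_iff (by positivity)]
      intro i
      have n1 := ((t i).sound c0 c1 c2 c3).diff x y (dist x y) hx hy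
        (fun j => by rw [← Real.dist_eq]; exact dist_le_pi_dist x y j)
      have n3 := mul_le_mul_of_nonneg_right (hs i) hd
      rw [Real.dist_eq]
      refine n1.trans (n3.trans (le_of_eq ?_))
      norm_num
  obtain ⟨x, hx, hfix, -⟩ := hcon.exists_fixedPoint' Metric.isClosed_closedBall.isComplete hmaps
    (x := c) ((hbox c).2 (box_self c)) (edist_ne_top _ _)
  rw [hbox] at hx
  refine ⟨x, fun i => ?_, fun i => congrFun hfix i⟩
  rw [← hr]
  exact hx i


/-- The four polynomials of the system as expressions. -/
def G1 : E :=
  let x1 := E.X 0; let x2 := E.X 1; let y := E.X 2; let z := E.X 3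
  let yy := y.mul y; let zz := z.mul z
  ((((((E.C 2).mul ((x1.mul x1).mul (yy.mul x2))).add
    ((x1.mul x1).mul (zz.mul x2))).add
    ((E.C (-2)).mul ((x1.mul yy).mul (zz.mul (x2.mul x2))))).add
    ((E.C (-2)).mul (x1.mul (yy.mul zz)))).add
    ((E.C (-1)).mul (x1.mul (zz.mul (x2.mul x2))))).add
    ((E.C 2).mul (yy.mul (zz.mul x2)))

def G2 : E :=
  let x1 := E.X 0; let x2 := E.X 1; let y := E.X 2; let z := E.X 3
  let yy := y.mul y
  ((((((((E.C 3).mul (x1.mul (z.mul x2))).add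
    ((E.C (-4)).mul ((yy.mul y).mul x2))).add
    ((E.C 4).mul ((yy.mul z).mul (x2.mul x2)))).add
    ((E.C 4).mul (yy.mul z))).add
    ((E.C 4).mul (y.mul ((z.mul z).mul x2)))).add
    ((E.C (-20)).mul (y.mul (z.mul x2)))).add
    ((E.C 4).mul (y.mul x2))).add
    ((E.C 5).mul (z.mul (x2.mul x2)))

def G3 : E :=
  let x1 := E.X 0; let x2 := E.X 1; let y := E.X 2; let z := E.X 3
  let yy := y.mul y; let zz := z.mul z
  ((((((((E.C 3).mul (x1.mul yy)).add
    ((E.C (-3)).mul (x1.mul zz))).add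
    ((E.C 6).mul ((yy.mul y).mul z))).add
    ((E.C (-20)).mul (yy.mul z))).add
    ((E.C (-6)).mul (y.mul (zz.mul z)))).add
    ((E.C 20).mul (y.mul zz))).add
    ((E.C (-2)).mul (y.mul z))).add
    ((E.C (-3)).mul (zz.mul x2))

def G4 : E :=
  let x1 := E.X 0; let x2 := E.X 1; let y := E.X 2; let z := E.X 3
  let zz := z.mul z
  ((((((E.C (-3)).mul (x1.mul y)).add
    ((E.C 3).mul (y.mul (zz.mul x2)))).add
    ((E.C (-20)).mul (y.mul zz))).add
    ((E.C 20).mul (y.mul z))).add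
    ((E.C 4).mul (zz.mul z))).add
    ((E.C (-4)).mul z)

/-- Newton-type map, one coordinate. -/
def T (i : Fin 4) (p q r s : ℚ) : E :=
  (E.X i).add ((E.C (-1)).mul (((((E.C p).mul G1).add ((E.C q).mul G2)).add
    ((E.C r).mul G3)).add ((E.C s).mul G4)))

theorem T_eval {i : Fin 4} {p q r s : ℚ} {x : Fin 4 → ℝ} (h : (T i p q r s).eval x = x i) :
    p * G1.eval x + q * G2.eval x + r * G3.eval x + s * G4.eval x = 0 := by
  simp only [T, E.eval] at h
  push_cast at h
  linarith

theorem sys_of (x : Fin 4 → ℝ) (p0 : 0 < x 0) (p1 : 0 < x 1) (p2 : 0 < x 2) (p3 : 0 < x 3)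
    (h1 : G1.eval x = 0) (h2 : G2.eval x = 0) (h3 : G3.eval x = 0) (h4 : G4.eval x = 0) :
    IsEinsteinSolV2H4 (x 0, x 1, x 2, x 3) := by
  simp only [G1, E.eval] at h1
  simp only [G2, E.eval] at h2
  simp only [G3, E.eval] at h3
  simp only [G4, E.eval] at h4
  push_cast at h1 h2 h3 h4
  refine ⟨p0, p1, p2, p3, ?_, ?_, ?_, ?_⟩ <;> dsimp only
  · linear_combination h1
  · linear_combination h2
  · linear_combination h3
  · linear_combination h4

theorem sol0 : ∃ x : Fin 4 → ℝ, IsEinsteinSolV2H4 (x 0, x 1, x 2, x 3) ∧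
    |x 3 - (64398434/100000000)| ≤ 1/1000000 := by
  obtain ⟨x, hx, h⟩ := exists_zero (22700220/100000000) (20749109/100000000) (36219834/100000000) (64398434/100000000)
    (T 0 (-18626578/1000000) (-1592951/1000000) (-311381/1000000) (-105979/1000000))
    (T 1 (-4764986/1000000) (-1375631/1000000) (-200393/1000000) (-54328/1000000))
    (T 2 (-8271551/1000000) (-733588/1000000) (-11067/1000000) (252375/1000000))
    (T 3 (-19947371/1000000) (-2371707/1000000) (246593/1000000) (172381/1000000))
    ⟨by decide +kernel, by decide +kernel, by decide +kernel, by decide +kernel⟩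
  have b0 := abs_le.1 (hx 0)
  have b1 := abs_le.1 (hx 1)
  have b2 := abs_le.1 (hx 2)
  have b3 := abs_le.1 (hx 3)
  simp only [vec4] at b0 b1 b2 b3
  push_cast at b0 b1 b2 b3
  have e0 := T_eval (h 0)
  have e1 := T_eval (h 1)
  have e2 := T_eval (h 2)
  have e3 := T_eval (h 3)
  clear h hx
  push_cast at e0 e1 e2 e3
  refine ⟨x, sys_of x (by linarith) (by linarith) (by linarith) (by linarith) ?_ ?_ ?_ ?_,
    abs_le.2 ⟨by linarith, by linarith⟩⟩
  all_goals
    clear b0 b1 b2 b3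
    generalize G1.eval x = g1 at *
    generalize G2.eval x = g2 at *
    generalize G3.eval x = g3 at *
    generalize G4.eval x = g4 at *
    linarith

theorem sol1 : ∃ x : Fin 4 → ℝ, IsEinsteinSolV2H4 (x 0, x 1, x 2, x 3) ∧
    |x 3 - (68399659/100000000)| ≤ 1/1000000 := by
  obtain ⟨x, hx, h⟩ := exists_zero (129369248/100000000) (29264186/100000000) (170772808/100000000) (68399659/100000000)
    (T 0 (132262/1000000) (47876/1000000) (27154/1000000) (-105003/1000000))
    (T 1 (-6238/1000000) (-46295/1000000) (-10801/1000000) (-23065/1000000))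
    (T 2 (-182755/1000000) (-82961/1000000) (84952/1000000) (49007/1000000))
    (T 3 (-95285/1000000) (-47956/1000000) (-10398/1000000) (-53412/1000000))
    ⟨by decide +kernel, by decide +kernel, by decide +kernel, by decide +kernel⟩
  have b0 := abs_le.1 (hx 0)
  have b1 := abs_le.1 (hx 1)
  have b2 := abs_le.1 (hx 2)
  have b3 := abs_le.1 (hx 3)
  simp only [vec4] at b0 b1 b2 b3
  push_cast at b0 b1 b2 b3
  have e0 := T_eval (h 0)
  have e1 := T_eval (h 1)
  have e2 := T_eval (h 2)
  have e3 := T_eval (h 3)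
  clear h hx
  push_cast at e0 e1 e2 e3
  refine ⟨x, sys_of x (by linarith) (by linarith) (by linarith) (by linarith) ?_ ?_ ?_ ?_,
    abs_le.2 ⟨by linarith, by linarith⟩⟩
  all_goals
    clear b0 b1 b2 b3
    generalize G1.eval x = g1 at *
    generalize G2.eval x = g2 at *
    generalize G3.eval x = g3 at *
    generalize G4.eval x = g4 at *
    linarith

theorem sol2 : ∃ x : Fin 4 → ℝ, IsEinsteinSolV2H4 (x 0, x 1, x 2, x 3) ∧
    |x 3 - (146199560/100000000)| ≤ 1/1000000 := by
  obtain ⟨x, hx, h⟩ := exists_zero (42784111/100000000) (189137271/100000000) (249669094/100000000) (146199560/100000000)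
    (T 0 (-9502/1000000) (-1866/1000000) (-1390/1000000) (-3403/1000000))
    (T 1 (75/1000000) (10031/1000000) (10248/1000000) (26860/1000000))
    (T 2 (2864/1000000) (2662/1000000) (24277/1000000) (2255/1000000))
    (T 3 (1962/1000000) (5075/1000000) (3327/1000000) (-16681/1000000))
    ⟨by decide +kernel, by decide +kernel, by decide +kernel, by decide +kernel⟩
  have b0 := abs_le.1 (hx 0)
  have b1 := abs_le.1 (hx 1)
  have b2 := abs_le.1 (hx 2)
  have b3 := abs_le.1 (hx 3)
  simp only [vec4] at b0 b1 b2 b3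
  push_cast at b0 b1 b2 b3
  have e0 := T_eval (h 0)
  have e1 := T_eval (h 1)
  have e2 := T_eval (h 2)
  have e3 := T_eval (h 3)
  clear h hx
  push_cast at e0 e1 e2 e3
  refine ⟨x, sys_of x (by linarith) (by linarith) (by linarith) (by linarith) ?_ ?_ ?_ ?_,
    abs_le.2 ⟨by linarith, by linarith⟩⟩
  all_goals
    clear b0 b1 b2 b3
    generalize G1.eval x = g1 at *
    generalize G2.eval x = g2 at *
    generalize G3.eval x = g3 at *
    generalize G4.eval x = g4 at *
    linarith

theorem sol3 : ∃ x : Fin 4 → ℝ, IsEinsteinSolV2H4 (x 0, x 1, x 2, x 3) ∧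
    |x 3 - (155283278/100000000)| ≤ 1/1000000 := by
  obtain ⟨x, hx, h⟩ := exists_zero (32219897/100000000) (35249646/100000000) (56243346/100000000) (155283278/100000000)
    (T 0 (-715241/1000000) (-149269/1000000) (-48130/1000000) (2273/1000000))
    (T 1 (88405/1000000) (-184779/1000000) (-68504/1000000) (6003/1000000))
    (T 2 (375596/1000000) (146552/1000000) (-25757/1000000) (-55995/1000000))
    (T 3 (1384530/1000000) (899044/1000000) (-65858/1000000) (34448/1000000))
    ⟨by decide +kernel, by decide +kernel, by decide +kernel, by decide +kernel⟩
  have b0 := abs_le.1 (hx 0)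
  have b1 := abs_le.1 (hx 1)
  have b2 := abs_le.1 (hx 2)
  have b3 := abs_le.1 (hx 3)
  simp only [vec4] at b0 b1 b2 b3
  push_cast at b0 b1 b2 b3
  have e0 := T_eval (h 0)
  have e1 := T_eval (h 1)
  have e2 := T_eval (h 2)
  have e3 := T_eval (h 3)
  clear h hx
  push_cast at e0 e1 e2 e3
  refine ⟨x, sys_of x (by linarith) (by linarith) (by linarith) (by linarith) ?_ ?_ ?_ ?_,
    abs_le.2 ⟨by linarith, by linarith⟩⟩
  all_goals
    clear b0 b1 b2 b3
    generalize G1.eval x = g1 at *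
    generalize G2.eval x = g2 at *
    generalize G3.eval x = g3 at *
    generalize G4.eval x = g4 at *
    linarith

theorem jensen (t : ℝ) (ht : 0 < t) (h : 9 * t ^ 2 - 20 * t + 6 = 0) :
    IsEinsteinSolV2H4 (t, t, t, 1) := by
  refine ⟨ht, ht, ht, one_pos, ?_, ?_, ?_, ?_⟩ <;> dsimp only
  · ring
  · ring
  · linear_combination t * h
  · ring

theorem adn (b : ℝ) (hb : 0 < b) (h : 6 * b ^ 4 - 20 * b ^ 3 + 27 * b ^ 2 - 40 * b + 18 = 0) :
    IsEinsteinSolV2H4 (b / (2 + b ^ 2), b / (2 + b ^ 2), b, 1) := by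
  have h2 : 0 < 2 + b ^ 2 := by positivity
  refine ⟨div_pos hb h2, div_pos hb h2, hb, one_pos, ?_, ?_, ?_, ?_⟩ <;> dsimp only
  · ring
  · field_simp
    ring
  · field_simp
    linear_combination b * h
  · ring

theorem adn_root (l u : ℝ) (hlu : l ≤ u)
    (h : (0 : ℝ) ∈ Set.uIcc (6 * l ^ 4 - 20 * l ^ 3 + 27 * l ^ 2 - 40 * l + 18)
      (6 * u ^ 4 - 20 * u ^ 3 + 27 * u ^ 2 - 40 * u + 18)) :
    ∃ b : ℝ, l ≤ b ∧ b ≤ u ∧ 6 * b ^ 4 - 20 * b ^ 3 + 27 * b ^ 2 - 40 * b + 18 = 0 := by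
  have hc : ContinuousOn (fun b : ℝ => 6 * b ^ 4 - 20 * b ^ 3 + 27 * b ^ 2 - 40 * b + 18)
      (Set.uIcc l u) := by fun_prop
  obtain ⟨b, hb, e⟩ := intermediate_value_uIcc hc h
  rw [Set.uIcc_of_le hlu] at hb
  exact ⟨b, hb.1, hb.2, e⟩

theorem adn_ne (b : ℝ) (hb : 0 < b) : b / (2 + b ^ 2) ≠ b := by
  have h2 : 0 < 2 + b ^ 2 := by positivity
  intro h
  rw [div_eq_iff h2.ne'] at h
  nlinarith [pow_pos hb 3]

/-- **Theorem 4.1(2).**  There exist at least eight pairwise distinct quadruples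
`(x1, x2, x12, x13)` of positive reals solving `g1 = g2 = g3 = g4 = 0`: four of them with
`x13 ≠ 1` and pairwise distinct `x13`-coordinates (two with `x13 ∈ (0,1)` and two with
`x13 ∈ (1,2)`); two of the form `(t, t, t, 1)` with distinct positive `t` (Jensen's
metrics); and two of the form `(a, a, b, 1)` with positive `a ≠ b`, for two distinct pairs
`(a, b)` (the ADN metrics). -/
theorem eight_einstein_V2H4 :
    ∃ v : Fin 8 → ℝ × ℝ × ℝ × ℝ,
      Function.Injective v ∧
      (∀ i, IsEinsteinSolV2H4 (v i)) ∧
      (∀ i : Fin 8, i < 4 → (v i).2.2.2 ≠ 1) ∧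
      (∀ i j : Fin 8, i < 4 → j < 4 → i ≠ j → (v i).2.2.2 ≠ (v j).2.2.2) ∧
      (v 0).2.2.2 ∈ Set.Ioo (0 : ℝ) 1 ∧ (v 1).2.2.2 ∈ Set.Ioo (0 : ℝ) 1 ∧
      (v 2).2.2.2 ∈ Set.Ioo (1 : ℝ) 2 ∧ (v 3).2.2.2 ∈ Set.Ioo (1 : ℝ) 2 ∧
      (∃ t : ℝ, 0 < t ∧ v 4 = (t, t, t, 1)) ∧
      (∃ s : ℝ, 0 < s ∧ v 5 = (s, s, s, 1)) ∧
      (∃ a b : ℝ, 0 < a ∧ 0 < b ∧ a ≠ b ∧ v 6 = (a, a, b, 1)) ∧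
      (∃ a' b' : ℝ, 0 < a' ∧ 0 < b' ∧ a' ≠ b' ∧ v 7 = (a', a', b', 1)) := by
  obtain ⟨p, hp, bp⟩ := sol0
  obtain ⟨q, hq, bq⟩ := sol1
  obtain ⟨r, hr, br⟩ := sol2
  obtain ⟨s, hs, bs⟩ := sol3
  obtain ⟨b, lb, ub, eb⟩ := adn_root (1 / 2) 1 (by norm_num)
    (by rw [Set.mem_uIcc]; right; norm_num)
  obtain ⟨d, ld, ud, ed⟩ := adn_root (3 / 2) 3 (by norm_num)
    (by rw [Set.mem_uIcc]; left; norm_num)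
  have hb : 0 < b := by linarith
  have hd : 0 < d := by linarith
  have w2 : √46 ^ 2 = 46 := Real.sq_sqrt (by norm_num)
  have w0 : 0 < √46 := Real.sqrt_pos.2 (by norm_num)
  have w1 : √46 < 10 := by nlinarith
  obtain ⟨w, hw⟩ : ∃ w, w = √46 := ⟨_, rfl⟩
  rw [← hw] at w0 w1 w2
  have jt : 0 < (10 - w) / 9 := by linarith
  have ju : 0 < (10 + w) / 9 := by linarith
  have hJ1 := jensen ((10 - w) / 9) jt (by linear_combination w2 / 9)
  have hJ2 := jensen ((10 + w) / 9) ju (by linear_combination w2 / 9)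
  have hJ : (10 - w) / 9 < (10 + w) / 9 := by linarith
  generalize (10 - w) / 9 = t at *
  generalize (10 + w) / 9 = u at *
  have hA1 := adn b hb eb
  have hA2 := adn d hd ed
  have na := adn_ne b hb
  have nd := adn_ne d hd
  have pa : 0 < b / (2 + b ^ 2) := by positivity
  have pd : 0 < d / (2 + d ^ 2) := by positivity
  generalize b / (2 + b ^ 2) = a at *
  generalize d / (2 + d ^ 2) = c at *
  rw [abs_le] at bp bq br bs
  have z0 : p 3 < q 3 := by linarith [bp.2, bq.1]
  have z1 : q 3 < 1 := by linarith [bq.2]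
  have z2 : 1 < r 3 := by linarith [br.1]
  have z3 : r 3 < s 3 := by linarith [br.2, bs.1]
  have z4 : s 3 < 2 := by linarith [bs.2]
  have zp : 0 < p 3 := by linarith [bp.1]
  generalize p 3 = p3 at *
  generalize q 3 = q3 at *
  generalize r 3 = r3 at *
  generalize s 3 = s3 at *
  clear bp bq br bs
  have f1 : p3 < 1 := z0.trans z1
  have f2 : p3 < r3 := f1.trans z2
  have f3 : p3 < s3 := f2.trans z3
  have f4 : q3 < r3 := z1.trans z2
  have f5 : q3 < s3 := f4.trans z3
  have f6 : 1 < s3 := z2.trans z3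
  have f7 : b < d := by linarith
  -- the four genuinely new solutions are told apart by their last coordinate
  refine ⟨![(p 0, p 1, p 2, p3), (q 0, q 1, q 2, q3), (r 0, r 1, r 2, r3), (s 0, s 1, s 2, s3),
    (t, t, t, 1), (u, u, u, 1), (a, a, b, 1), (c, c, d, 1)], ?_, ?_, ?_, ?_, ?_, ?_, ?_, ?_,
    ⟨t, jt, rfl⟩, ⟨u, ju, rfl⟩, ⟨a, b, pa, hb, na, rfl⟩, ⟨c, d, pd, hd, nd, rfl⟩⟩
  · have g : ∀ i j : Fin 8, i < j → ![(p 0, p 1, p 2, p3), (q 0, q 1, q 2, q3),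
        (r 0, r 1, r 2, r3), (s 0, s 1, s 2, s3),
        (t, t, t, 1), (u, u, u, 1), (a, a, b, 1), (c, c, d, 1)] i ≠
        ![(p 0, p 1, p 2, p3), (q 0, q 1, q 2, q3),
        (r 0, r 1, r 2, r3), (s 0, s 1, s 2, s3),
        (t, t, t, 1), (u, u, u, 1), (a, a, b, 1), (c, c, d, 1)] j := by
      intro i j hij e
      fin_cases i <;> fin_cases j <;> simp at hij <;> simp at e <;> grind
    intro i j e
    rcases lt_trichotomy i j with h | h | h
    · exact absurd e (g i j h)
    · exact h
    · exact absurd e.symm (g j i h)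
  · intro i
    fin_cases i
    exacts [hp, hq, hr, hs, hJ1, hJ2, hA1, hA2]
  · intro i hi
    fin_cases i <;> simp at hi ⊢ <;> grind
  · intro i j hi hj hij
    fin_cases i <;> simp at hi <;> fin_cases j <;> simp at hj hij ⊢ <;> grind
  · exact ⟨zp, f1⟩
  · exact ⟨zp.trans z0, z1⟩
  · exact ⟨z2, z3.trans z4⟩
  · exact ⟨f6, z4⟩
end

section
/- Let n and p be integers with p ≥ 2 and 4p ≤ 3n. Then there exist two triples (u0, u1, u2) and (u0', u1', u2') of positive real numbers, both solving the system f1 = f2 = f3 = 0 below, such that 0 < u1 < 1/5 and 1/5 < u1' < 1 (in particular u1 ≠ 1 ≠ u1' and the two solutions are distinct). -/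
/-- The triple `(u0, u1, u2)` of reals solves the normalized Einstein system
`f1 = f2 = f3 = 0` (with `u3 = 1`) for `Ad(U(p)×Sp(n−p))`-invariant metrics on
`Sp(n)/Sp(n−p)`, for real parameters `n, p`. -/
def IsFlagEinsteinSol (n p u0 u1 u2 : ℝ) : Prop :=
  2*u0*u1*(n - p) - 2*u1^2*(n - p) + 2*(p + 1)*u0*u1*u2^2 - (p + 2)*u1^2*u2^2
    - p*u2^2 = 0 ∧
  u1^2*((2*n - p)*p - 1) - 4*(n + 1)*p*u1*u2 + p^2*u2^2 + p*(p + 2)*u1^2*u2^2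
    + p*(p + 1)*u1 + u0*u1 = 0 ∧
  4*(n + 1)*p*u2 + p*(-2*n + p - 1) + 2*(p - 1)*(p + 2)*u1*u2^2
    - (p - 1)*(p + 1)*u1 - 4*p*(p + 1)*u2^2 + 4*u0*u2^2 - u0 = 0

/-- `u1` as a function of `u2`, from the factor of `f2 + u1 * f3` other than `1 - u1`. -/
noncomputable def flagX (p m y : ℝ) : ℝ :=
  y^2*((p^2+p+2)*y^2+m*p)/((3*p+1)*(p+2)*y^4+m*(5*p+6)*y^2+2*m^2)

/-- The product `u0 * u1` as a function of `u2`, from `f1 = 0`. -/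
noncomputable def flagV (p m y : ℝ) : ℝ :=
  (2*(flagX p m y)^2*m+((p+2)*(flagX p m y)^2+p)*y^2)/(2*(m+(p+1)*y^2))

/-- The polynomial `f2` along the curve. -/
noncomputable def flagF (p m y : ℝ) : ℝ :=
  (flagX p m y)^2*((2*(p+m) - p)*p - 1) - 4*((p+m) + 1)*p*(flagX p m y)*y + p^2*y^2
    + p*(p + 2)*(flagX p m y)^2*y^2 + p*(p + 1)*(flagX p m y) + flagV p m y

lemma flagDen_pos {p m : ℝ} (hp : 2 ≤ p) (hm : 0 < m) (y : ℝ) :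
    0 < (3*p+1)*(p+2)*y^4+m*(5*p+6)*y^2+2*m^2 := by
  have : 0 < p := by linarith
  positivity

lemma flagX_eq {p m : ℝ} (hp : 2 ≤ p) (hm : 0 < m) (y : ℝ) :
    flagX p m y * ((3*p+1)*(p+2)*y^4+m*(5*p+6)*y^2+2*m^2)
      = y^2*((p^2+p+2)*y^2+m*p) := by
  unfold flagX
  exact div_mul_cancel₀ _ (flagDen_pos hp hm y).ne'

lemma flagX_pos {p m y : ℝ} (hp : 2 ≤ p) (hm : 0 < m) (hy : 0 < y) : 0 < flagX p m y := by
  have : 0 < p := by linarith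
  exact div_pos (by positivity) (flagDen_pos hp hm y)

lemma flagV_eq {p m : ℝ} (hp : 2 ≤ p) (hm : 0 < m) (y : ℝ) :
    flagV p m y * (2*(m+(p+1)*y^2))
      = 2*(flagX p m y)^2*m+((p+2)*(flagX p m y)^2+p)*y^2 := by
  unfold flagV
  have : 0 < p := by linarith
  have h : 0 < 2*(m+(p+1)*y^2) := by positivity
  exact div_mul_cancel₀ _ h.ne'

lemma flagV_pos {p m y : ℝ} (hp : 2 ≤ p) (hm : 0 < m) (hy : 0 < y) : 0 < flagV p m y := by
  have : 0 < p := by linarith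
  unfold flagV
  positivity

lemma flagF_cont {p m : ℝ} (hp : 2 ≤ p) (hm : 0 < m) : Continuous (flagF p m) := by
  have : 0 < p := by linarith
  have hX : Continuous (flagX p m) := by
    unfold flagX
    exact Continuous.div (by fun_prop) (by fun_prop) (fun y => (flagDen_pos hp hm y).ne')
  have hV : Continuous (flagV p m) := by
    unfold flagV
    refine Continuous.div (by fun_prop) (by fun_prop) (fun y => ?_)
    have h : 0 < 2*(m+(p+1)*y^2) := by positivity
    exact h.ne'
  unfold flagF
  fun_prop

lemma flag_sol {p m y : ℝ} (hp : 2 ≤ p) (hm : 0 < m) (hy : 0 < y) (hF : flagF p m y = 0) :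
    IsFlagEinsteinSol (p+m) p (flagV p m y / flagX p m y) (flagX p m y) y := by
  have hX := flagX_pos hp hm hy
  have hG := flagX_eq hp hm y
  have hV := flagV_eq hp hm y
  unfold flagF at hF
  generalize flagX p m y = x at *
  generalize flagV p m y = v at *
  obtain ⟨u, rfl⟩ : ∃ u, v = u * x := ⟨v / x, by field_simp⟩
  rw [mul_div_cancel_right₀ u hX.ne']
  have hD : 0 < m+(p+1)*y^2 := by
    have : 0 < p := by linarith
    positivity
  refine ⟨by linear_combination hV, by linear_combination hF, ?_⟩
  have h : x * (m+(p+1)*y^2) * (4*((p+m) + 1)*p*y + p*(-2*(p+m) + p - 1)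
      + 2*(p - 1)*(p + 2)*x*y^2
      - (p - 1)*(p + 1)*x - 4*p*(p + 1)*y^2 + 4*u*y^2 - u) = 0 := by
    linear_combination (-(m+(p+1)*y^2)) * hF + 2*y^2*hV - p*(1-x)*hG
  rcases mul_eq_zero.1 h with h | h
  · exact absurd h (by positivity)
  · exact h

lemma flagX_lt_one {p m : ℝ} (hp : 2 ≤ p) (hm : 0 < m) (y : ℝ) : flagX p m y < 1 := by
  unfold flagX
  rw [div_lt_one (flagDen_pos hp hm y)]
  have h0 : 0 < p := by linarith
  have : 0 < (2*p^2+6*p)*y^4+m*(4*p+6)*y^2+2*m^2 := by positivity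
  linarith

lemma flag_small {p m y : ℝ} (hp : 2 ≤ p) (hm : 0 < m) (hy : 0 < y)
    (h : 4*(p+m+1)*y < m) : 0 < flagF p m y := by
  have h0 : 0 < p := by linarith
  have hX := flagX_pos hp hm hy
  have hV := flagV_pos hp hm hy
  have hb : flagX p m y * m ≤ p * y^2 := by
    have e : flagX p m y * m = (y^2*((p^2+p+2)*y^2+m*p)*m)
      /((3*p+1)*(p+2)*y^4+m*(5*p+6)*y^2+2*m^2) := by unfold flagX; ring
    rw [e, div_le_iff₀ (flagDen_pos hp hm y)]
    have h1 : 0 ≤ (4*p^2+5*p-2)*y^4*m := by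
      have : 0 ≤ 4*p^2+5*p-2 := by nlinarith
      positivity
    have : 0 ≤ p*((3*p+1)*(p+2))*y^6 + p*y^2*m^2 := by positivity
    nlinarith
  unfold flagF
  generalize flagX p m y = x at *
  have h1 : 4*(p+m+1)*x*y < p*y^2 := by nlinarith
  have h2 : 0 ≤ x^2*((2*(p+m) - p)*p - 1) := by
    have : 0 ≤ (2*(p+m) - p)*p - 1 := by nlinarith
    positivity
  have h3 : 0 < p*(p + 2)*x^2*y^2 + p*(p + 1)*x := by positivity
  nlinarith

lemma flag_large {p m y : ℝ} (hp : 2 ≤ p) (hm : 0 < m) (hy : 0 < y)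
    (h : 4*(p+m+1) ≤ y) : 0 < flagF p m y := by
  have h0 : 0 < p := by linarith
  have hX := flagX_pos hp hm hy
  have hV := flagV_pos hp hm hy
  have hb := flagX_lt_one hp hm y
  unfold flagF
  generalize flagX p m y = x at *
  have h1 : 4*(p+m+1)*x*y < p*y^2 := by
    have a1 : 4*(p+m+1)*x < y := by nlinarith
    nlinarith
  have h2 : 0 ≤ x^2*((2*(p+m) - p)*p - 1) := by
    have : 0 ≤ (2*(p+m) - p)*p - 1 := by nlinarith
    positivity
  have h3 : 0 < p*(p + 2)*x^2*y^2 + p*(p + 1)*x := by positivity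
  nlinarith

lemma flagX_sub {p m : ℝ} (hp : 2 ≤ p) (hm : 0 < m) (y : ℝ) :
    flagX p m y - 1/5 = 2*((p^2-p+4)*y^4-3*m*y^2-m^2)
      / (5*((3*p+1)*(p+2)*y^4+m*(5*p+6)*y^2+2*m^2)) := by
  have := flagDen_pos hp hm y
  unfold flagX
  field_simp
  ring

lemma flag_lt_iff {c m y w : ℝ} (hm : 0 < m) (hy : 0 < y)
    (hw : c*w^4 - 3*m*w^2-m^2 = 0) (h : y < w) : c*y^4-3*m*y^2-m^2 < 0 := by
  have h2 : y^2 < w^2 := by nlinarith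
  have hw2 : 0 < w^2 := by nlinarith
  have hy2 : 0 < y^2 := by positivity
  have : w^4 * (c*y^4-3*m*y^2-m^2) = -(w^2-y^2)*(3*m*(w^2*y^2) + m^2*(w^2+y^2)) := by
    linear_combination y^4*hw
  have h3 : w^4 * (c*y^4-3*m*y^2-m^2) < 0 := by
    rw [this]
    have : 0 < (w^2-y^2)*(3*m*(w^2*y^2) + m^2*(w^2+y^2)) := by
      apply mul_pos (by linarith) (by positivity)
    linarith
  by_contra hc
  push Not at hc
  have : 0 ≤ w^4 * (c*y^4-3*m*y^2-m^2) := by positivity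
  linarith

lemma flag_gt_iff {c m y w : ℝ} (hm : 0 < m) (hw0 : 0 < w)
    (hw : c*w^4 - 3*m*w^2-m^2 = 0) (h : w < y) : 0 < c*y^4-3*m*y^2-m^2 := by
  have h2 : w^2 < y^2 := by nlinarith
  have hw2 : 0 < w^2 := by positivity
  have hy2 : 0 < y^2 := by nlinarith
  have : w^4 * (c*y^4-3*m*y^2-m^2) = (y^2-w^2)*(3*m*(w^2*y^2) + m^2*(w^2+y^2)) := by
    linear_combination y^4*hw
  have h3 : 0 < w^4 * (c*y^4-3*m*y^2-m^2) := by
    rw [this]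
    apply mul_pos (by linarith) (by positivity)
  exact pos_of_mul_pos_right h3 (by positivity)

/-- The value of `f2` at the point where `u1 = 1/5` is negative. -/
lemma flag_mid {p m w : ℝ} (hp : 2 ≤ p) (hm : 0 < m) (hw0 : 0 < w)
    (hw : (p^2-p+4)*w^4 - 3*m*w^2-m^2 = 0)
    (hk : 2*m*p+6*p^2+5*p+12+(26*p^2+2*p)*w^2 < 20*(m+p+1)*p*w) : flagF p m w < 0 := by
  have h0 : 0 < p := by linarith
  have hx : flagX p m w = 1/5 := by
    have := flagX_sub hp hm w
    rw [hw] at this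
    simp at this
    linarith
  have hv : flagV p m w ≤ 13/25 := by
    unfold flagV
    rw [hx, div_le_iff₀ (by positivity)]
    have : 0 < w^2 := by positivity
    nlinarith
  unfold flagF
  rw [hx]
  nlinarith

lemma flag_main {p m w : ℝ} (hp : 2 ≤ p) (hm : 0 < m) (hw0 : 0 < w)
    (hw : (p^2-p+4)*w^4 - 3*m*w^2-m^2 = 0)
    (hk : 2*m*p+6*p^2+5*p+12+(26*p^2+2*p)*w^2 < 20*(m+p+1)*p*w) :
    ∃ u0 u1 u2 u0' u1' u2' : ℝ,
      0 < u0 ∧ 0 < u1 ∧ 0 < u2 ∧ 0 < u0' ∧ 0 < u1' ∧ 0 < u2' ∧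
      IsFlagEinsteinSol (p+m) p u0 u1 u2 ∧
      IsFlagEinsteinSol (p+m) p u0' u1' u2' ∧
      u1 < 1/5 ∧ 1/5 < u1' ∧ u1' < 1 := by
  have h0 : 0 < p := by linarith
  have hF := flag_mid hp hm hw0 hw hk
  have hc := flagF_cont hp hm
  set a := m/(8*(p+m+1)) with ha
  have ha0 : 0 < a := by positivity
  have hFa : 0 < flagF p m a := by
    apply flag_small hp hm ha0
    have : 4*(p+m+1)*a = m/2 := by rw [ha]; field_simp; norm_num
    linarith
  have hb0 : 0 < 4*(p+m+1) := by positivity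
  have hFb : 0 < flagF p m (4*(p+m+1)) := flag_large hp hm hb0 le_rfl
  have haw : a < w := by
    by_contra hcon
    push Not at hcon
    rcases hcon.lt_or_eq with h | h
    · have h1 := flag_gt_iff hm hw0 hw h
      have h2 : 8*(p+m+1)*a = m := by rw [ha]; field_simp
      have h3 : p * a < m := by nlinarith
      have h4 : p^2*a^2 < m^2 := by nlinarith [mul_pos h0 ha0]
      have h6 : 8*a ≤ 1 := by
        by_contra hh
        push Not at hh
        nlinarith
      have h7 : a^2 ≤ 1 := by nlinarith
      have h8 : p^2*a^4 ≤ m^2*a^2 := by nlinarith [sq_nonneg a]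
      have h5 : 8*a ≤ m := by nlinarith [mul_pos h0 ha0, mul_pos hm ha0]
      have h9 : 0 < a^3 := by positivity
      have h10 : 64*a^2*a^2 ≤ m^2*a^2 := by nlinarith [sq_nonneg a]
      have h11 : a^2 * (64*a^2) ≤ a^2 * 1 := by nlinarith [sq_nonneg a]
      have h12 : a^2*64 ≤ 1 := by nlinarith
      have h13 : m^2*(a^2*64) ≤ m^2*1 := by nlinarith [sq_nonneg m]
      have h14 : 0 < m*a^2 := by positivity
      have h15 : 0 < p*a^4 := by positivity
      nlinarith
    · rw [← h] at hFa
      linarith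
  have hwb : w < 4*(p+m+1) := by
    by_contra hcon
    push Not at hcon
    have := flag_large hp hm hw0 hcon
    linarith
  obtain ⟨y, hy, hy0⟩ := intermediate_value_Icc' haw.le hc.continuousOn
    (show (0:ℝ) ∈ Set.Icc _ _ from ⟨hF.le, hFa.le⟩)
  obtain ⟨y', hy', hy0'⟩ := intermediate_value_Icc hwb.le hc.continuousOn
    (show (0:ℝ) ∈ Set.Icc _ _ from ⟨hF.le, hFb.le⟩)
  have hyp : 0 < y := lt_of_lt_of_le ha0 hy.1
  have hyp' : 0 < y' := lt_of_lt_of_le hw0 hy'.1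
  have hyw : y < w := lt_of_le_of_ne hy.2 (by rintro rfl; linarith)
  have hyw' : w < y' := lt_of_le_of_ne hy'.1 (by rintro rfl; linarith)
  have hx := flagX_pos hp hm hyp
  have hx' := flagX_pos hp hm hyp'
  refine ⟨_, _, y, _, _, y', div_pos (flagV_pos hp hm hyp) hx, hx, hyp,
    div_pos (flagV_pos hp hm hyp') hx', hx', hyp', flag_sol hp hm hyp hy0,
    flag_sol hp hm hyp' hy0', ?_, ?_, flagX_lt_one hp hm y'⟩
  · have h1 := flagX_sub hp hm y
    have h2 := flag_lt_iff hm hyp hw hyw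
    have h3 : 2*((p^2-p+4)*y^4-3*m*y^2-m^2)
      / (5*((3*p+1)*(p+2)*y^4+m*(5*p+6)*y^2+2*m^2)) < 0 :=
      div_neg_of_neg_of_pos (by linarith) (by linarith [flagDen_pos hp hm y])
    linarith
  · have h1 := flagX_sub hp hm y'
    have h2 := flag_gt_iff hm hw0 hw hyw'
    have h3 : 0 < 2*((p^2-p+4)*y'^4-3*m*y'^2-m^2)
      / (5*((3*p+1)*(p+2)*y'^4+m*(5*p+6)*y'^2+2*m^2)) :=
      div_pos (by linarith) (by linarith [flagDen_pos hp hm y'])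
    linarith

/-- Concavity: positivity at two endpoints gives positivity in between. -/
lemma flag_concave {A B C a b t : ℝ} (hat : a ≤ t) (htb : t ≤ b)
    (ha : (A + B*a)^2 < C*a) (hb : (A+B*b)^2 < C*b) : (A+B*t)^2 < C*t := by
  rcases hat.eq_or_lt with rfl | hat
  · exact ha
  have hba : 0 < b - a := by linarith
  have h1 : 0 ≤ B^2*((t-a)*(b-t)*(b-a)) := by
    have : 0 ≤ b - t := by linarith
    have : 0 < t - a := by linarith
    positivity
  have h2 : (b-a)*(C*t-(A+B*t)^2) = (b-t)*(C*a-(A+B*a)^2)+(t-a)*(C*b-(A+B*b)^2)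
      + B^2*((t-a)*(b-t)*(b-a)) := by ring
  have h3 : 0 < (b-a)*(C*t-(A+B*t)^2) := by
    rw [h2]
    have : 0 ≤ (b-t)*(C*a-(A+B*a)^2) := mul_nonneg (by linarith) (by linarith)
    have : 0 < (t-a)*(C*b-(A+B*b)^2) := mul_pos (by linarith) (by linarith)
    linarith
  have := pos_of_mul_pos_right h3 hba.le
  linarith

lemma flag_exists {p m b : ℝ} (hp : 2 ≤ p) (hm : 0 < m) (hb : 1/p ≤ b)
    (hb2 : 3*b+1 ≤ (p^2-p+4)*b^2)
    (h1 : (2*m*p+6*p^2+5*p+12+((26*p^2+2*p)*m)*(1/p))^2 < (400*(m+p+1)^2*p^2*m)*(1/p))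
    (h2 : (2*m*p+6*p^2+5*p+12+((26*p^2+2*p)*m)*b)^2 < (400*(m+p+1)^2*p^2*m)*b) :
    ∃ w : ℝ, 0 < w ∧ (p^2-p+4)*w^4 - 3*m*w^2-m^2 = 0 ∧
     2*m*p+6*p^2+5*p+12+(26*p^2+2*p)*w^2 < 20*(m+p+1)*p*w := by
  have h0 : 0 < p := by linarith
  have hc : Continuous (fun t : ℝ => (p^2-p+4)*t^2-3*t-1) := by fun_prop
  have ha : (p^2-p+4)*(1/p)^2-3*(1/p)-1 ≤ 0 := by
    have : (p^2-p+4)*(1/p)^2-3*(1/p)-1 = -(4*(p-1))/p^2 := by field_simp; ring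
    rw [this]
    exact div_nonpos_of_nonpos_of_nonneg (by linarith) (by positivity)
  obtain ⟨t, ht, ht0⟩ := intermediate_value_Icc hb hc.continuousOn
    (show (0:ℝ) ∈ Set.Icc _ _ from ⟨ha, by linarith⟩)
  simp only at ht0
  have htp : 0 < t := lt_of_lt_of_le (by positivity) ht.1
  have hk := flag_concave ht.1 ht.2 h1 h2
  have hs : Real.sqrt (m*t) ^ 2 = m*t := Real.sq_sqrt (by positivity)
  have hsp : 0 < Real.sqrt (m*t) := Real.sqrt_pos.2 (by positivity)
  refine ⟨Real.sqrt (m*t), hsp, ?_, ?_⟩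
  · linear_combination m^2*ht0 + ((p^2-p+4)*(Real.sqrt (m*t) ^ 2+m*t) - 3*m)*hs
  · apply lt_of_pow_lt_pow_left₀ 2 (by positivity)
    rw [hs]
    have : (20*(m+p+1)*p*Real.sqrt (m*t))^2 = 400*(m+p+1)^2*p^2*m*t := by
      rw [mul_pow, hs]; ring
    rw [this]
    linarith

lemma flag_num {p m : ℝ} (hp : p = 2 ∧ 1 ≤ m ∨ p = 3 ∧ 1 ≤ m ∨ 4 ≤ p ∧ p ≤ 3 * m) :
    ∃ w : ℝ, 0 < w ∧ (p^2-p+4)*w^4 - 3*m*w^2-m^2 = 0 ∧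
     2*m*p+6*p^2+5*p+12+(26*p^2+2*p)*w^2 < 20*(m+p+1)*p*w := by
  rcases hp with ⟨rfl, hm⟩ | ⟨rfl, hm⟩ | ⟨hp, hm⟩
  · obtain ⟨k, hk, rfl⟩ : ∃ k : ℝ, 0 ≤ k ∧ m = 1 + k := ⟨m-1, by linarith, by ring⟩
    apply flag_exists (b := 1) le_rfl (by linarith) <;> norm_num
    · rw [← sub_pos]; ring_nf; positivity
    · rw [← sub_pos]; ring_nf; positivity
  · obtain ⟨k, hk, rfl⟩ : ∃ k : ℝ, 0 ≤ k ∧ m = 1 + k := ⟨m-1, by linarith, by ring⟩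
    apply flag_exists (b := 5/9) (by norm_num) (by linarith) <;> norm_num
    · rw [← sub_pos]; ring_nf; positivity
    · rw [← sub_pos]; ring_nf; positivity
  · obtain ⟨k, hk, rfl⟩ : ∃ k : ℝ, 0 ≤ k ∧ m = p/3 + k := ⟨m-p/3, by linarith, by ring⟩
    obtain ⟨q, hq, rfl⟩ : ∃ q : ℝ, 0 ≤ q ∧ p = 4 + q := ⟨p-4, by linarith, by ring⟩
    have e1 : (4+q) - 1 = 3 + q := by ring
    apply flag_exists (b := (5+q)/((4+q)*(3+q))) (by linarith) (by positivity)
    · rw [div_le_div_iff₀ (by positivity) (by positivity)]; nlinarith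
    · rw [← sub_nonneg]
      have : ((4+q)^2-(4+q)+4)*((5+q)/((4+q)*(3+q)))^2 - (3*((5+q)/((4+q)*(3+q)))+1)
        = (2*(4+q)^2+10*(4+q)+4)/((4+q)*(3+q))^2 := by field_simp; ring
      rw [this]; positivity
    · rw [← sub_pos]; field_simp; ring_nf; positivity
    · rw [← sub_pos]; field_simp; ring_nf; positivity

/-- **Theorem B (Theorem 4.2), polynomial core.**  Let `n, p` be integers with `p ≥ 2` and
`4p ≤ 3n`.  Then there exist two triples `(u0, u1, u2)` and `(u0', u1', u2')` of positive
reals, both solving `f1 = f2 = f3 = 0`, with `0 < u1 < 1/5` and `1/5 < u1' < 1` (in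
particular `u1 ≠ 1 ≠ u1'` and the two solutions are distinct). -/
theorem two_new_einstein_flag (n p : ℤ) (hp : 2 ≤ p) (hnp : 4 * p ≤ 3 * n) :
    ∃ u0 u1 u2 u0' u1' u2' : ℝ,
      0 < u0 ∧ 0 < u1 ∧ 0 < u2 ∧ 0 < u0' ∧ 0 < u1' ∧ 0 < u2' ∧
      IsFlagEinsteinSol (n : ℝ) (p : ℝ) u0 u1 u2 ∧
      IsFlagEinsteinSol (n : ℝ) (p : ℝ) u0' u1' u2' ∧
      u1 < 1/5 ∧ 1/5 < u1' ∧ u1' < 1 := by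
  have hm : p = 2 ∧ 1 ≤ n - p ∨ p = 3 ∧ 1 ≤ n - p ∨ 4 ≤ p ∧ p ≤ 3 * (n - p) := by omega
  have hp' : (2:ℝ) ≤ p := by exact_mod_cast hp
  have hm0 : (0:ℝ) < (n:ℝ) - p := by
    have : 0 < n - p := by omega
    exact_mod_cast this
  have hm' : (p:ℝ) = 2 ∧ 1 ≤ (n:ℝ) - p ∨ (p:ℝ) = 3 ∧ 1 ≤ (n:ℝ) - p
      ∨ 4 ≤ (p:ℝ) ∧ (p:ℝ) ≤ 3 * ((n:ℝ) - p) := by exact_mod_cast hm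
  obtain ⟨w, hw0, hw, hk⟩ := flag_num hm'
  have h := flag_main hp' hm0 hw0 hw hk
  rwa [add_sub_cancel] at h
end

section
/- Let n, p be real numbers with p ≥ 1 and n > p, and let u ≤ 0 be a real number. Then U2(u) > 0, where U2(u) = 2(p+1)(p+2)(5p³+8p²+p+2)u⁸ − [(12p⁴+40p³+60p²+64p+16)(n−p) + 12p⁵+52p⁴+100p³+124p²+80p+16]u⁷ + [(34p⁴+116p³+122p²+40p+8)(n−p) + 4p⁵+15p⁴+34p³+51p²+36p+4]u⁶ − [(32p³+72p²+72p+48)(n−p)² + (32p⁴+104p³+144p²+120p+48)(n−p)]u⁵ + [(42p³+94p²+52p)(n−p)² + (10p⁴+28p³+50p²+56p+24)(n−p)]u⁴ − [(28p²+32p+16)(n−p)³ + (28p³+60p²+48p+16)(n−p)²]u³ + [(22p²+24p)(n−p)³ + (8p³+15p²+20p+14)(n−p)²]u² − [8(p²+p)(n−p)³ + 8p(n−p)⁴]u + 4p(n−p)⁴ + 2(p²+p+1)(n−p)³. In particular, every real root of U2 is positive. -/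
/-- The resolvent polynomial `U₂` in the variable `u₂` from the proof of Theorem 4.2,
obtained by eliminating `u₀, u₁` from the Einstein system for
`Ad(U(p)×Sp(n−p))`-invariant metrics on `Sp(n)/Sp(n−p)`. -/
noncomputable def U2poly (n p u : ℝ) : ℝ :=
  2*(p + 1)*(p + 2)*(5*p^3 + 8*p^2 + p + 2)*u^8
    - ((12*p^4 + 40*p^3 + 60*p^2 + 64*p + 16)*(n - p)
        + 12*p^5 + 52*p^4 + 100*p^3 + 124*p^2 + 80*p + 16)*u^7
    + ((34*p^4 + 116*p^3 + 122*p^2 + 40*p + 8)*(n - p)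
        + 4*p^5 + 15*p^4 + 34*p^3 + 51*p^2 + 36*p + 4)*u^6
    - ((32*p^3 + 72*p^2 + 72*p + 48)*(n - p)^2
        + (32*p^4 + 104*p^3 + 144*p^2 + 120*p + 48)*(n - p))*u^5
    + ((42*p^3 + 94*p^2 + 52*p)*(n - p)^2
        + (10*p^4 + 28*p^3 + 50*p^2 + 56*p + 24)*(n - p))*u^4
    - ((28*p^2 + 32*p + 16)*(n - p)^3
        + (28*p^3 + 60*p^2 + 48*p + 16)*(n - p)^2)*u^3
    + ((22*p^2 + 24*p)*(n - p)^3
        + (8*p^3 + 15*p^2 + 20*p + 14)*(n - p)^2)*u^2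
    - (8*(p^2 + p)*(n - p)^3 + 8*p*(n - p)^4)*u
    + 4*p*(n - p)^4 + 2*(p^2 + p + 1)*(n - p)^3

theorem U2poly_pos_aux (n p : ℝ) (hp : 1 ≤ p) (hnp : p < n) (u : ℝ) (hu : u ≤ 0) :
    0 < U2poly n p u := by
  obtain ⟨v, rfl⟩ : ∃ v, u = -v := ⟨-u, by ring⟩
  obtain ⟨m, rfl⟩ : ∃ m, n = p + m := ⟨n - p, by ring⟩
  have hv : 0 ≤ v := by linarith
  have hm : 0 < m := by linarith
  have hp0 : 0 < p := by linarith
  have key : U2poly (p + m) p (-v) =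
      2*(p + 1)*(p + 2)*(5*p^3 + 8*p^2 + p + 2)*v^8
    + ((12*p^4 + 40*p^3 + 60*p^2 + 64*p + 16)*m
        + 12*p^5 + 52*p^4 + 100*p^3 + 124*p^2 + 80*p + 16)*v^7
    + ((34*p^4 + 116*p^3 + 122*p^2 + 40*p + 8)*m
        + 4*p^5 + 15*p^4 + 34*p^3 + 51*p^2 + 36*p + 4)*v^6
    + ((32*p^3 + 72*p^2 + 72*p + 48)*m^2
        + (32*p^4 + 104*p^3 + 144*p^2 + 120*p + 48)*m)*v^5
    + ((42*p^3 + 94*p^2 + 52*p)*m^2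
        + (10*p^4 + 28*p^3 + 50*p^2 + 56*p + 24)*m)*v^4
    + ((28*p^2 + 32*p + 16)*m^3
        + (28*p^3 + 60*p^2 + 48*p + 16)*m^2)*v^3
    + ((22*p^2 + 24*p)*m^3
        + (8*p^3 + 15*p^2 + 20*p + 14)*m^2)*v^2
    + (8*(p^2 + p)*m^3 + 8*p*m^4)*v
    + 4*p*m^4 + 2*(p^2 + p + 1)*m^3 := by
    unfold U2poly
    ring
  rw [key]
  positivity

/-- **Positivity of `U₂` on `(-∞, 0]`** (proof of Theorem 4.2).  For real `n, p` with
`p ≥ 1` and `n > p`, and any real `u ≤ 0`, one has `U₂(u) > 0`.  In particular every real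
root of `U₂` is positive. -/
theorem U2poly_pos_of_nonpos (n p : ℝ) (hp : 1 ≤ p) (hnp : p < n) (u : ℝ) (hu : u ≤ 0) :
    0 < U2poly n p u ∧ ∀ r : ℝ, U2poly n p r = 0 → 0 < r := by
  refine ⟨U2poly_pos_aux n p hp hnp u hu, fun r hr => ?_⟩
  by_contra h
  have := U2poly_pos_aux n p hp hnp r (not_lt.mp h)
  linarith
end

section
/- Let n, p be integers with p ≥ 2 and 4p ≤ 3n. Suppose u0, u1, u2 are positive real numbers with u1 ≠ 1 satisfying f1 = f2 = f3 = 0, where f1 = 2u0u1(n−p) − 2u1²(n−p) + 2(p+1)u0u1u2² − (p+2)u1²u2² − p·u2², f2 = u1²((2n−p)p − 1) − 4(n+1)p·u1u2 + p²u2² + p(p+2)u1²u2² + p(p+1)u1 + u0u1, and f3 = 4(n+1)p·u2 + p(−2n+p−1) + 2(p−1)(p+2)u1u2² − (p−1)(p+1)u1 − 4p(p+1)u2² + 4u0u2² − u0. Then U2(u2) = 0, where U2(u) = 2(p+1)(p+2)(5p³+8p²+p+2)u⁸ − [(12p⁴+40p³+60p²+64p+16)(n−p) + 12p⁵+52p⁴+100p³+124p²+80p+16]u⁷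 + [(34p⁴+116p³+122p²+40p+8)(n−p) + 4p⁵+15p⁴+34p³+51p²+36p+4]u⁶ − [(32p³+72p²+72p+48)(n−p)² + (32p⁴+104p³+144p²+120p+48)(n−p)]u⁵ + [(42p³+94p²+52p)(n−p)² + (10p⁴+28p³+50p²+56p+24)(n−p)]u⁴ − [(28p²+32p+16)(n−p)³ + (28p³+60p²+48p+16)(n−p)²]u³ + [(22p²+24p)(n−p)³ + (8p³+15p²+20p+14)(n−p)²]u² − [8(p²+p)(n−p)³ + 8p(n−p)⁴]u + 4p(n−p)⁴ + 2(p²+p+1)(n−p)³. -/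
/-- **Gröbner-basis elimination step in the proof of Theorem 4.2.**  Let `n, p` be integers
with `p ≥ 2` and `4p ≤ 3n`.  If `u0, u1, u2` are positive reals with `u1 ≠ 1` satisfying the
Einstein system `f1 = f2 = f3 = 0` (normalized by `u3 = 1`) for
`Ad(U(p)×Sp(n−p))`-invariant metrics on `Sp(n)/Sp(n−p)`, then `u2` is a root of the
resolvent polynomial `U₂`. -/
theorem U2_vanishes_at_solution (n p : ℤ) (hp : 2 ≤ p) (hnp : 4 * p ≤ 3 * n)
    (u0 u1 u2 : ℝ) (h0 : 0 < u0) (h1 : 0 < u1) (h2 : 0 < u2) (h1ne : u1 ≠ 1)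
    (hf1 : 2*u0*u1*((n : ℝ) - p) - 2*u1^2*((n : ℝ) - p) + 2*((p : ℝ) + 1)*u0*u1*u2^2
        - ((p : ℝ) + 2)*u1^2*u2^2 - (p : ℝ)*u2^2 = 0)
    (hf2 : u1^2*((2*(n : ℝ) - p)*p - 1) - 4*((n : ℝ) + 1)*p*u1*u2 + (p : ℝ)^2*u2^2
        + (p : ℝ)*(p + 2)*u1^2*u2^2 + (p : ℝ)*(p + 1)*u1 + u0*u1 = 0)
    (hf3 : 4*((n : ℝ) + 1)*p*u2 + (p : ℝ)*(-2*n + p - 1) + 2*((p : ℝ) - 1)*(p + 2)*u1*u2^2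
        - ((p : ℝ) - 1)*(p + 1)*u1 - 4*(p : ℝ)*(p + 1)*u2^2 + 4*u0*u2^2 - u0 = 0) :
    U2poly (n : ℝ) (p : ℝ) u2 = 0 := by
  have hpR : (2:ℝ) ≤ (p:ℝ) := by exact_mod_cast hp
  have hp0 : (p:ℝ) ≠ 0 := by linarith
  unfold U2poly
  generalize (p:ℝ) = p at *
  obtain ⟨m, hm⟩ : ∃ m : ℝ, (n:ℝ) = m + p := ⟨(n:ℝ) - p, by ring⟩
  rw [hm] at hf1 hf2 hf3 ⊢
  have hmp : m + p - p = m := by ring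
  rw [hmp] at hf1 ⊢
  have hx : u1 - 1 ≠ 0 := sub_ne_zero.mpr h1ne
  -- eliminate `u0` using `hf2`: two quadratics in `u1`
  obtain ⟨a, ha⟩ : ∃ a : ℝ, a = -8*m*u2^2 + 2*m - 4*p*u2^4 - p*u2^2 - 8*u2^4 + 4*u2^2 := ⟨_, rfl⟩
  obtain ⟨b, hb⟩ : ∃ b : ℝ, b = (2*u2-1)*(8*m*u2^2 + 4*m*u2 + 2*m + 8*p*u2^2 + 8*u2^2) := ⟨_, rfl⟩
  obtain ⟨c, hc⟩ : ∃ c : ℝ, c = -p*u2^2*(4*u2^2-1) := ⟨_, rfl⟩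
  obtain ⟨l, hl⟩ : ∃ l : ℝ, l = 2*m^2 + 5*m*p*u2^2 + 6*m*u2^2 + 3*p^2*u2^4 + 7*p*u2^4 + 2*u2^4 :=
    ⟨_, rfl⟩
  obtain ⟨k, hk⟩ : ∃ k : ℝ, k = u2^2*(-m*p - p^2*u2^2 - p*u2^2 - 2*u2^2) := ⟨_, rfl⟩
  have hQ3 : a*u1^2 + b*u1 + c = 0 := by
    apply mul_left_cancel₀ hp0
    rw [ha, hb, hc]
    linear_combination u1 * hf3 - (4*u2^2-1) * hf2
  -- the combination divisible by `u1 - 1`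
  have hL : l*u1 + k = 0 := by
    apply mul_left_cancel₀ (mul_ne_zero hp0 hx)
    rw [hl, hk]
    linear_combination 2*u2^2*(2*(m+(p+1)*u2^2) * hf2 - hf1)
      + (m+(p+1)*u2^2)*(u1 * hf3 - (4*u2^2-1) * hf2)
  have hR : a*k^2 - b*k*l + c*l^2 = 0 := by
    linear_combination l^2 * hQ3 - (a*(l*u1 - k) + b*l) * hL
  have hu : (-4*u2^4 : ℝ) ≠ 0 := by
    have : 0 < u2^4 := by positivity
    linarith
  apply mul_left_cancel₀ hu
  rw [ha, hb, hc, hl, hk] at hR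
  linear_combination hR
end
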